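/- Specialization of Theorem 2 to the single-source case (Remark on the CRBC): A source S1 can be reliably transmitted over the discrete memoryless cooperative relay broadcast channel with relay side information W3 and receiver side information W if there exists a joint pmf factoring as p(s1, w3, w) · p(x1 | s1) · p(x3 | s1) · p(y3, y | x1, x3) such that H(S1 | W3) < I(X1; Y3 | X3, S1) and H(S1 | W) < I(X1, X3; Y | W). -/

import Mathlib

open scoped BigOperators

/-- A probability mass function on a finite type. -/
def IsPmf {α : Type*} [Fintype α] (p : α → ℝ) : Prop :=
  (∀ a, 0 ≤ p a) ∧ ∑ a, p a = 1

/-- Shannon entropy (natural logarithm) of the push-forward of `μ` under `X`. -/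
noncomputable def entropyOf {Ω α : Type*} [Fintype Ω] [Fintype α] [DecidableEq α]
    (μ : Ω → ℝ) (X : Ω → α) : ℝ :=
  ∑ a : α, Real.negMulLog (∑ ω : Ω, if X ω = a then μ ω else 0)

/-- Conditional Shannon entropy `H(X | Y)` under `μ`. -/
noncomputable def condEntropyOf {Ω α β : Type*} [Fintype Ω] [Fintype α] [Fintype β]
    [DecidableEq α] [DecidableEq β] (μ : Ω → ℝ) (X : Ω → α) (Y : Ω → β) : ℝ :=
  entropyOf μ (fun ω => (X ω, Y ω)) - entropyOf μ Y

/-- Mutual information `I(X ; Y)` under `μ`. -/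
noncomputable def mutualInfoOf {Ω α β : Type*} [Fintype Ω] [Fintype α] [Fintype β]
    [DecidableEq α] [DecidableEq β] (μ : Ω → ℝ) (X : Ω → α) (Y : Ω → β) : ℝ :=
  entropyOf μ X + entropyOf μ Y - entropyOf μ (fun ω => (X ω, Y ω))

/-- Conditional mutual information `I(X ; Y | Z)` under `μ`. -/
noncomputable def condMutualInfoOf {Ω α β γ : Type*} [Fintype Ω] [Fintype α] [Fintype β]
    [Fintype γ] [DecidableEq α] [DecidableEq β] [DecidableEq γ]
    (μ : Ω → ℝ) (X : Ω → α) (Y : Ω → β) (Z : Ω → γ) : ℝ :=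
  entropyOf μ (fun ω => (X ω, Z ω)) + entropyOf μ (fun ω => (Y ω, Z ω))
    - entropyOf μ (fun ω => (X ω, Y ω, Z ω)) - entropyOf μ Z

/-- Causality of the relay encoding functions: the channel input of the relay at time `k`
depends on the relay channel outputs only through those at times `j < k`. -/
def CausalRelay {n : ℕ} {Y3 W3 X3 : Type*}
    (f3 : Fin n → (Fin n → Y3) → (Fin n → W3) → X3) : Prop :=
  ∀ (k : Fin n) (y y' : Fin n → Y3) (w : Fin n → W3),
    (∀ j : Fin n, j < k → y j = y' j) → f3 k y w = f3 k y' w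

/-- Error probability of a blocklength-`n` source-channel code over the discrete memoryless
cooperative relay broadcast channel (CRBC): both the relay decoder `g3` and the
destination decoder `g` must recover the source block. -/
noncomputable def crbcErrProb {S1 W W3 X1 X3 Y Y3 : Type*}
    [Fintype S1] [Fintype W] [Fintype W3] [Fintype Y] [Fintype Y3] [DecidableEq S1]
    (pSrc : S1 × W × W3 → ℝ) (Q : X1 × X3 → Y × Y3 → ℝ) (n : ℕ)
    (f1 : (Fin n → S1) → Fin n → X1)
    (f3 : Fin n → (Fin n → Y3) → (Fin n → W3) → X3)
    (g3 : (Fin n → Y3) → (Fin n → W3) → Fin n → S1)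
    (g : (Fin n → Y) → (Fin n → W) → Fin n → S1) : ℝ :=
  ∑ s1 : Fin n → S1, ∑ w : Fin n → W, ∑ w3 : Fin n → W3,
    ∑ y : Fin n → Y, ∑ y3 : Fin n → Y3,
      if g y w ≠ s1 ∨ g3 y3 w3 ≠ s1 then
        (∏ k : Fin n, pSrc (s1 k, w k, w3 k)) *
          ∏ k : Fin n, Q (f1 s1 k, f3 k y3 w3) (y k, y3 k)
      else 0

/-- The source `S1` can be reliably transmitted over the DM CRBC: codes with arbitrarily
small error probability exist. -/
def CrbcReliablyTransmitted {S1 W W3 X1 X3 Y Y3 : Type*}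
    [Fintype S1] [Fintype W] [Fintype W3] [Fintype Y] [Fintype Y3] [DecidableEq S1]
    (pSrc : S1 × W × W3 → ℝ) (Q : X1 × X3 → Y × Y3 → ℝ) : Prop :=
  ∀ ε : ℝ, 0 < ε → ∃ n : ℕ, 0 < n ∧
    ∃ (f1 : (Fin n → S1) → Fin n → X1)
      (f3 : Fin n → (Fin n → Y3) → (Fin n → W3) → X3)
      (g3 : (Fin n → Y3) → (Fin n → W3) → Fin n → S1)
      (g : (Fin n → Y) → (Fin n → W) → Fin n → S1),
      CausalRelay f3 ∧ crbcErrProb pSrc Q n f1 f3 g3 g ≤ ε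

/-- The single-letter joint distribution `p(s1,w3,w) p(x1|s1) p(x3|s1) p(y3,y|x1,x3)` of
the single-source specialization of Theorem 2. -/
noncomputable def crbcCpmJoint {S1 W W3 X1 X3 Y Y3 : Type*}
    (pSrc : S1 × W × W3 → ℝ) (Q : X1 × X3 → Y × Y3 → ℝ)
    (pX1 : S1 → X1 → ℝ) (pX3 : S1 → X3 → ℝ) :
    S1 × W3 × W × X1 × X3 × Y3 × Y → ℝ :=
  fun (s1, w3, w, x1, x3, y3, y) =>
    pSrc (s1, w, w3) * pX1 s1 x1 * pX3 s1 x3 * Q (x1, x3) (y, y3)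

/-- Sum over all tuples of a product of functions of the coordinates. -/
lemma sum_pi_prod {ι α : Type*} [Fintype ι] [DecidableEq ι] [Fintype α] (f : ι → α → ℝ) :
    ∑ x : ι → α, ∏ i, f i (x i) = ∏ i, ∑ a, f i a := by
  rw [Finset.prod_univ_sum, Fintype.piFinset_univ]

/-- Product pmfs are pmfs. -/
lemma isPmf_pi {ι α : Type*} [Fintype ι] [DecidableEq ι] [Fintype α] {p : ι → α → ℝ}
    (hp : ∀ i, IsPmf (p i)) : IsPmf fun x : ι → α => ∏ i, p i (x i) := by
  refine ⟨fun x => Finset.prod_nonneg fun i _ => (hp i).1 _, ?_⟩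
  rw [sum_pi_prod]
  exact Finset.prod_eq_one fun i _ => (hp i).2

/-- Under a product pmf two distinct coordinates are independent. -/
lemma sum_pi_prod_mul_mul {ι α : Type*} [Fintype ι] [DecidableEq ι] [Fintype α]
    {p : ι → α → ℝ} (hp : ∀ i, IsPmf (p i)) {i j : ι} (hij : i ≠ j) (f g : α → ℝ) :
    ∑ x : ι → α, (∏ k, p k (x k)) * (f (x i) * g (x j)) =
      (∑ a, p i a * f a) * ∑ b, p j b * g b := by
  have h : ∀ x : ι → α, (∏ k, p k (x k)) * (f (x i) * g (x j)) =
      ∏ k, p k (x k) * ((if k = i then f (x k) else 1) * (if k = j then g (x k) else 1)) := by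
    intro x
    rw [Finset.prod_mul_distrib, Finset.prod_mul_distrib]
    simp
  simp_rw [h]
  rw [sum_pi_prod fun k a => p k a * ((if k = i then f a else 1) * (if k = j then g a else 1))]
  rw [← Finset.mul_prod_erase _ _ (Finset.mem_univ i),
    ← Finset.mul_prod_erase _ _ (Finset.mem_erase.2 ⟨hij.symm, Finset.mem_univ j⟩),
    Finset.prod_eq_one, mul_one]
  · simp [hij, hij.symm]
  · intro k hk
    simp only [Finset.mem_erase, Finset.mem_univ, and_true] at hk
    simp [hk.1, hk.2, (hp k).2]

/-- One-coordinate marginal of a product pmf. -/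
lemma sum_pi_prod_mul {ι α : Type*} [Fintype ι] [DecidableEq ι] [Fintype α]
    {p : ι → α → ℝ} (hp : ∀ i, IsPmf (p i)) (i : ι) (f : α → ℝ) :
    ∑ x : ι → α, (∏ k, p k (x k)) * f (x i) = ∑ a, p i a * f a := by
  have h : ∀ x : ι → α, (∏ k, p k (x k)) * f (x i) =
      ∏ k, p k (x k) * (if k = i then f (x k) else 1) := by
    intro x
    rw [Finset.prod_mul_distrib]
    simp
  simp_rw [h]
  rw [sum_pi_prod fun k a => p k a * (if k = i then f a else 1),
    ← Finset.mul_prod_erase _ _ (Finset.mem_univ i), Finset.prod_eq_one, mul_one]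
  · simp
  · intro k hk
    simp only [Finset.mem_erase, Finset.mem_univ, and_true] at hk
    simp [hk, (hp k).2]

/-- Two-coordinate marginal of a product pmf. -/
lemma sum_pi_prod_mul₂ {ι α : Type*} [Fintype ι] [DecidableEq ι] [Fintype α]
    {p : ι → α → ℝ} (hp : ∀ i, IsPmf (p i)) {i j : ι} (hij : i ≠ j) (f : α → α → ℝ) :
    ∑ x : ι → α, (∏ k, p k (x k)) * f (x i) (x j) = ∑ a, ∑ b, p i a * p j b * f a b := by
  classical
  have h : ∀ x : ι → α, (∏ k, p k (x k)) * f (x i) (x j) =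
      ∑ c, (∏ k, p k (x k)) * ((if x i = c then 1 else 0) * f c (x j)) := by
    intro x
    simp
  simp_rw [h]
  rw [Finset.sum_comm]
  refine Finset.sum_congr rfl fun c _ => ?_
  rw [sum_pi_prod_mul_mul hp hij (fun a => if a = c then 1 else 0) (f c)]
  simp [Finset.mul_sum, mul_assoc]

/-- A maximum-score decision. -/
noncomputable def argMax {A : Type*} [Finite A] [Nonempty A] (u : A → ℝ) : A :=
  (Finite.exists_max u).choose

lemma le_argMax {A : Type*} [Finite A] [Nonempty A] (u : A → ℝ) (a : A) : u a ≤ u (argMax u) :=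
  (Finite.exists_max u).choose_spec a

lemma mul_min_one_div_le {u D κ N ρ : ℝ} (hu : 0 ≤ u) (hD : 0 ≤ D) (hκ : 0 ≤ κ)
    (hρ0 : 0 ≤ ρ) (hρ1 : ρ ≤ 1) (h1 : N ≤ κ) (h2 : u * N ≤ κ * D) :
    u * N ≤ κ * (u * (D / u) ^ ρ) := by
  rcases hu.eq_or_lt with rfl | hu
  · simp
  rcases le_total 1 (D / u) with h | h
  · have := Real.one_le_rpow h hρ0
    have h3 : u * N ≤ u * κ := by gcongr
    have h4 : u * κ * 1 ≤ u * κ * (D / u) ^ ρ := by gcongr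
    linarith
  · have h3 : D / u ≤ (D / u) ^ ρ := by
      rcases (div_nonneg hD hu.le).eq_or_lt with h0 | h0
      · rw [← h0]; positivity
      · simpa using Real.rpow_le_rpow_of_exponent_ge h0 h hρ1
    calc u * N ≤ κ * D := h2
      _ = κ * (u * (D / u)) := by field_simp
      _ ≤ _ := by gcongr

/-- Random coding bound for maximum a posteriori decoding of a message `a` with prior `p a v`
(`v` is the side information of the decoder) over the channel `L`, for a random codebook `cb`
with pairwise independent codewords of law `κ a`. -/
lemma map_random_coding {Ω A V C Y : Type*} [Fintype Ω] [Fintype A] [Fintype V] [Fintype C]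
    [Fintype Y] [DecidableEq A] [DecidableEq C] [Nonempty A]
    (ν : Ω → ℝ) (hν : ∀ ω, 0 ≤ ν ω) (cb : Ω → A → C) (κ : A → C → ℝ) (hκ : ∀ a c, 0 ≤ κ a c)
    (h1 : ∀ a c, ∑ ω, ν ω * (if cb ω a = c then 1 else 0) = κ a c)
    (h2 : ∀ a a' c (f : C → ℝ), a ≠ a' →
      ∑ ω, ν ω * ((if cb ω a = c then 1 else 0) * f (cb ω a')) = κ a c * ∑ c', κ a' c' * f c')
    (p : A → V → ℝ) (hp : ∀ a v, 0 ≤ p a v) (L : C → Y → ℝ) (hL : ∀ c y, 0 ≤ L c y)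
    (D : V → Y → ℝ) (hD : ∀ v y, ∑ a, ∑ c, κ a c * (p a v * L c y) ≤ D v y)
    {ρ : ℝ} (hρ0 : 0 ≤ ρ) (hρ1 : ρ ≤ 1) :
    ∑ ω, ν ω * ∑ a, ∑ v, ∑ y, p a v * L (cb ω a) y *
        (if argMax (fun a' => p a' v * L (cb ω a') y) ≠ a then 1 else 0) ≤
      ∑ a, ∑ v, ∑ y, ∑ c, κ a c * (p a v * L c y * (D v y / (p a v * L c y)) ^ ρ) := by
  have hD0 : ∀ v y, 0 ≤ D v y := fun v y => le_trans (Finset.sum_nonneg fun a _ =>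
    Finset.sum_nonneg fun c _ => mul_nonneg (hκ _ _) (mul_nonneg (hp _ _) (hL _ _))) (hD v y)
  simp_rw [Finset.mul_sum]
  rw [Finset.sum_comm]
  refine Finset.sum_le_sum fun a _ => ?_
  rw [Finset.sum_comm]
  refine Finset.sum_le_sum fun v _ => ?_
  rw [Finset.sum_comm]
  refine Finset.sum_le_sum fun y _ => ?_
  set e : Ω → ℝ := fun ω =>
    if argMax (fun a' => p a' v * L (cb ω a') y) ≠ a then 1 else 0 with he
  have he0 : ∀ ω, 0 ≤ e ω := fun ω => by simp only [he]; split_ifs <;> norm_num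
  have he1 : ∀ ω, e ω ≤ 1 := fun ω => by simp only [he]; split_ifs <;> norm_num
  have hsplit : ∑ ω, ν ω * (p a v * L (cb ω a) y * e ω) =
      ∑ c, (p a v * L c y) * ∑ ω, ν ω * ((if cb ω a = c then 1 else 0) * e ω) := by
    simp_rw [Finset.mul_sum]
    rw [Finset.sum_comm]
    refine Finset.sum_congr rfl fun ω _ => ?_
    rw [Finset.sum_eq_single (cb ω a)]
    · simp; ring
    · intro c _ hc; simp [hc.symm]
    · simp
  refine hsplit.le.trans (Finset.sum_le_sum fun c _ => ?_)
  refine mul_min_one_div_le (mul_nonneg (hp _ _) (hL _ _)) (hD0 v y) (hκ _ _) hρ0 hρ1 ?_ ?_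
  · rw [← h1 a c]
    refine Finset.sum_le_sum fun ω _ => mul_le_mul_of_nonneg_left ?_ (hν ω)
    split_ifs
    · simpa using he1 ω
    · simp
  · calc p a v * L c y * ∑ ω, ν ω * ((if cb ω a = c then 1 else 0) * e ω)
        ≤ ∑ ω, ν ω * ((if cb ω a = c then 1 else 0) *
            ∑ a' ∈ Finset.univ.erase a, p a' v * L (cb ω a') y) := by
          rw [Finset.mul_sum]
          refine Finset.sum_le_sum fun ω _ => ?_
          rw [mul_left_comm]
          refine mul_le_mul_of_nonneg_left ?_ (hν ω)
          rw [mul_left_comm]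
          have hs : ∀ a' ∈ Finset.univ.erase a, 0 ≤ p a' v * L (cb ω a') y :=
            fun a' _ => mul_nonneg (hp _ _) (hL _ _)
          split_ifs with hc
          · rw [one_mul, one_mul]
            by_cases hb : argMax (fun a' => p a' v * L (cb ω a') y) ≠ a
            · simp only [he, if_pos hb, mul_one]
              rw [← hc]
              exact (le_argMax (fun a' => p a' v * L (cb ω a') y) a).trans
                (Finset.single_le_sum hs (Finset.mem_erase.2 ⟨hb, Finset.mem_univ _⟩))
            · simp only [he, if_neg hb, mul_zero]
              exact Finset.sum_nonneg hs
          · simp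
      _ = ∑ a' ∈ Finset.univ.erase a, κ a c * ∑ c', κ a' c' * (p a' v * L c' y) := by
          simp_rw [Finset.mul_sum]
          rw [Finset.sum_comm]
          refine Finset.sum_congr rfl fun a' ha' => ?_
          rw [← Finset.mul_sum]
          exact h2 a a' c (fun c' => p a' v * L c' y) (Finset.ne_of_mem_erase ha').symm
      _ ≤ κ a c * D v y := by
          rw [← Finset.mul_sum]
          refine mul_le_mul_of_nonneg_left (le_trans ?_ (hD v y)) (hκ _ _)
          exact Finset.sum_le_sum_of_subset_of_nonneg (Finset.erase_subset _ _) fun a' _ _ =>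
            Finset.sum_nonneg fun c _ => mul_nonneg (hκ _ _) (mul_nonneg (hp _ _) (hL _ _))

section OneShot

variable {S W W3 X1 X3 Y Y3 : Type*} [Fintype S] [Fintype W] [Fintype W3]
  [Fintype Y] [Fintype Y3]

/-- Marginal pmf of `S`. -/
noncomputable def margS (P : S × W × W3 → ℝ) (s : S) : ℝ := ∑ w, ∑ w3, P (s, w, w3)

/-- Marginal pmf of `(S, W)`. -/
noncomputable def margSW (P : S × W × W3 → ℝ) (s : S) (w : W) : ℝ := ∑ w3, P (s, w, w3)

/-- Marginal pmf of `(S, W3)`. -/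
noncomputable def margSW3 (P : S × W × W3 → ℝ) (s : S) (w3 : W3) : ℝ := ∑ w, P (s, w, w3)

/-- Marginal channel to the destination. -/
noncomputable def chanY (Q : X1 × X3 → Y × Y3 → ℝ) (x : X1 × X3) (y : Y) : ℝ :=
  ∑ y3, Q x (y, y3)

/-- Marginal channel to the relay. -/
noncomputable def chanY3 (Q : X1 × X3 → Y × Y3 → ℝ) (x : X1 × X3) (y3 : Y3) : ℝ :=
  ∑ y, Q x (y, y3)

lemma sum_mul_eq_margS (P : S × W × W3 → ℝ) (f : S → ℝ) :
    ∑ θ, P θ * f θ.1 = ∑ s, margS P s * f s := by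
  simp only [Fintype.sum_prod_type, margS, Finset.sum_mul]

lemma sum_mul_eq_margSW (P : S × W × W3 → ℝ) (f : S → W → ℝ) :
    ∑ θ, P θ * f θ.1 θ.2.1 = ∑ s, ∑ w, margSW P s w * f s w := by
  simp only [Fintype.sum_prod_type, margSW, Finset.sum_mul]

lemma sum_mul_eq_margSW3 (P : S × W × W3 → ℝ) (f : S → W3 → ℝ) :
    ∑ θ, P θ * f θ.1 θ.2.2 = ∑ s, ∑ w3, margSW3 P s w3 * f s w3 := by
  simp only [Fintype.sum_prod_type, margSW3, Finset.sum_mul]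
  exact Finset.sum_congr rfl fun s _ => Finset.sum_comm

lemma sum_mul_eq_chanY (Q : X1 × X3 → Y × Y3 → ℝ) (x : X1 × X3) (f : Y → ℝ) :
    ∑ z, Q x z * f z.1 = ∑ y, chanY Q x y * f y := by
  simp only [Fintype.sum_prod_type, chanY, Finset.sum_mul]

lemma sum_mul_eq_chanY3 (Q : X1 × X3 → Y × Y3 → ℝ) (x : X1 × X3) (f : Y3 → ℝ) :
    ∑ z, Q x z * f z.2 = ∑ y, chanY3 Q x y * f y := by
  simp only [Fintype.sum_prod_type, chanY3, Finset.sum_mul]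
  exact Finset.sum_comm

lemma margS_nonneg {P : S × W × W3 → ℝ} (hP : IsPmf P) (s : S) : 0 ≤ margS P s :=
  Finset.sum_nonneg fun _ _ => Finset.sum_nonneg fun _ _ => hP.1 _

lemma margSW_nonneg {P : S × W × W3 → ℝ} (hP : IsPmf P) (s : S) (w : W) : 0 ≤ margSW P s w :=
  Finset.sum_nonneg fun _ _ => hP.1 _

lemma margSW3_nonneg {P : S × W × W3 → ℝ} (hP : IsPmf P) (s : S) (w : W3) :
    0 ≤ margSW3 P s w :=
  Finset.sum_nonneg fun _ _ => hP.1 _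

lemma chanY_nonneg {Q : X1 × X3 → Y × Y3 → ℝ} (hQ : ∀ x, IsPmf (Q x)) (x : X1 × X3) (y : Y) :
    0 ≤ chanY Q x y :=
  Finset.sum_nonneg fun _ _ => (hQ x).1 _

lemma chanY3_nonneg {Q : X1 × X3 → Y × Y3 → ℝ} (hQ : ∀ x, IsPmf (Q x)) (x : X1 × X3) (y : Y3) :
    0 ≤ chanY3 Q x y :=
  Finset.sum_nonneg fun _ _ => (hQ x).1 _

/-- Maximum a posteriori decoding of the next source block at the relay, which knows the
current block `s`. -/
noncomputable def relayDec [Nonempty S] (P : S × W × W3 → ℝ) (Q : X1 × X3 → Y × Y3 → ℝ)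
    (x1 : S × S → X1) (x3 : S → X3) (s : S) (y3 : Y3) (w3 : W3) : S :=
  argMax fun a => margSW3 P a w3 * chanY3 Q (x1 (a, s), x3 s) y3

/-- Maximum a posteriori decoding of the current source block at the destination, which knows
the next block `s'`. -/
noncomputable def destDec [Nonempty S] (P : S × W × W3 → ℝ) (Q : X1 × X3 → Y × Y3 → ℝ)
    (x1 : S × S → X1) (x3 : S → X3) (s' : S) (y : Y) (w : W) : S :=
  argMax fun a => margSW P a w * chanY Q (x1 (s', a), x3 a) y

/-- Error probability of the relay in one block. -/
noncomputable def relayErr [Nonempty S] [DecidableEq S] (P : S × W × W3 → ℝ)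
    (Q : X1 × X3 → Y × Y3 → ℝ) (x1 : S × S → X1) (x3 : S → X3) : ℝ :=
  ∑ θ, ∑ θ', P θ * P θ' * ∑ z, Q (x1 (θ'.1, θ.1), x3 θ.1) z *
    if relayDec P Q x1 x3 θ.1 z.2 θ'.2.2 ≠ θ'.1 then 1 else 0

/-- Error probability of the destination in one block. -/
noncomputable def destErr [Nonempty S] [DecidableEq S] (P : S × W × W3 → ℝ)
    (Q : X1 × X3 → Y × Y3 → ℝ) (x1 : S × S → X1) (x3 : S → X3) : ℝ :=
  ∑ θ, ∑ θ', P θ * P θ' * ∑ z, Q (x1 (θ'.1, θ.1), x3 θ.1) z *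
    if destDec P Q x1 x3 θ'.1 z.1 θ.2.1 ≠ θ.1 then 1 else 0

lemma relayErr_eq [Nonempty S] [DecidableEq S] (P : S × W × W3 → ℝ)
    (Q : X1 × X3 → Y × Y3 → ℝ) (x1 : S × S → X1) (x3 : S → X3) :
    relayErr P Q x1 x3 = ∑ s, margS P s * ∑ a, ∑ v, ∑ y,
      margSW3 P a v * chanY3 Q (x1 (a, s), x3 s) y *
        if argMax (fun a' => margSW3 P a' v * chanY3 Q (x1 (a', s), x3 s) y) ≠ a
        then 1 else 0 := by
  unfold relayErr
  rw [← sum_mul_eq_margS P fun s => ∑ a, ∑ v, ∑ y,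
      margSW3 P a v * chanY3 Q (x1 (a, s), x3 s) y *
        if argMax (fun a' => margSW3 P a' v * chanY3 Q (x1 (a', s), x3 s) y) ≠ a
        then 1 else 0]
  refine Finset.sum_congr rfl fun θ _ => ?_
  simp_rw [mul_assoc]
  rw [← Finset.mul_sum]
  congr 1
  simp_rw [← Finset.mul_sum]
  rw [← sum_mul_eq_margSW3 P]
  refine Finset.sum_congr rfl fun θ' _ => ?_
  congr 1
  rw [← sum_mul_eq_chanY3 Q]
  rfl

lemma destErr_eq [Nonempty S] [DecidableEq S] (P : S × W × W3 → ℝ)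
    (Q : X1 × X3 → Y × Y3 → ℝ) (x1 : S × S → X1) (x3 : S → X3) :
    destErr P Q x1 x3 = ∑ s', margS P s' * ∑ a, ∑ v, ∑ y,
      margSW P a v * chanY Q (x1 (s', a), x3 a) y *
        if argMax (fun a' => margSW P a' v * chanY Q (x1 (s', a'), x3 a') y) ≠ a
        then 1 else 0 := by
  unfold destErr
  rw [← sum_mul_eq_margS P fun s' => ∑ a, ∑ v, ∑ y,
      margSW P a v * chanY Q (x1 (s', a), x3 a) y *
        if argMax (fun a' => margSW P a' v * chanY Q (x1 (s', a'), x3 a') y) ≠ a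
        then 1 else 0]
  rw [Finset.sum_comm]
  refine Finset.sum_congr rfl fun θ' _ => ?_
  simp_rw [mul_comm (P _) (P θ'), mul_assoc]
  rw [← Finset.mul_sum]
  congr 1
  simp_rw [← Finset.mul_sum]
  rw [← sum_mul_eq_margSW P]
  refine Finset.sum_congr rfl fun θ _ => ?_
  congr 1
  rw [← sum_mul_eq_chanY Q]
  rfl

/-- The Gallager-type function of the source decoding problem with joint pmf `q`. -/
noncomputable def sourceFun {A V : Type*} [Fintype A] [Fintype V] (q : A → V → ℝ) (ρ : ℝ) : ℝ :=
  ∑ a, ∑ v, q a v * ((∑ a', q a' v) / q a v) ^ ρ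

variable [Fintype X1] [Fintype X3]

/-- The Gallager-type function of the channel to the relay. -/
noncomputable def relayFun (pS : S → ℝ) (k1 : S → X1 → ℝ) (k3 : S → X3 → ℝ)
    (L : X1 × X3 → Y3 → ℝ) (ρ : ℝ) : ℝ :=
  ∑ s, ∑ x3, ∑ x1, ∑ y, pS s * k3 s x3 * k1 s x1 * L (x1, x3) y *
    ((∑ x1', k1 s x1' * L (x1', x3) y) / L (x1, x3) y) ^ ρ

/-- The pmf of the side information and the channel output at the destination. -/
noncomputable def destOut (q : S → W → ℝ) (k1 : S → X1 → ℝ) (k3 : S → X3 → ℝ)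
    (L : X1 × X3 → Y → ℝ) (w : W) (y : Y) : ℝ :=
  ∑ s, ∑ x1, ∑ x3, q s w * k1 s x1 * k3 s x3 * L (x1, x3) y

/-- The Gallager-type function of joint source-channel decoding at the destination. -/
noncomputable def destFun (q : S → W → ℝ) (k1 : S → X1 → ℝ) (k3 : S → X3 → ℝ)
    (L : X1 × X3 → Y → ℝ) (ρ : ℝ) : ℝ :=
  ∑ s, ∑ w, ∑ x1, ∑ x3, ∑ y, q s w * k1 s x1 * k3 s x3 * L (x1, x3) y *
    (destOut q k1 k3 L w y / (q s w * L (x1, x3) y)) ^ ρ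

lemma relay_random_coding [DecidableEq S] [DecidableEq X1] [Nonempty S]
    {P : S × W × W3 → ℝ} (hP : IsPmf P) {Q : X1 × X3 → Y × Y3 → ℝ} (hQ : ∀ x, IsPmf (Q x))
    {k1 : S → X1 → ℝ} (hk1 : ∀ s, IsPmf (k1 s)) {k3 : S → X3 → ℝ} (hk3 : ∀ s, IsPmf (k3 s))
    {ρ : ℝ} (hρ0 : 0 ≤ ρ) (hρ1 : ρ ≤ 1) :
    ∑ x3 : S → X3, (∏ s, k3 s (x3 s)) * ∑ x1 : S × S → X1, (∏ q, k1 q.2 (x1 q)) *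
        relayErr P Q x1 x3 ≤
      sourceFun (margSW3 P) ρ * relayFun (margS P) k1 k3 (chanY3 Q) ρ := by
  have hk1' : ∀ q : S × S, IsPmf (k1 q.2) := fun q => hk1 q.2
  set G : S → X3 → ℝ := fun s c3 => ∑ a, ∑ v, ∑ y, ∑ c, k1 s c *
    (margSW3 P a v * chanY3 Q (c, c3) y *
      (((∑ a', margSW3 P a' v) * ∑ x1', k1 s x1' * chanY3 Q (x1', c3) y) /
        (margSW3 P a v * chanY3 Q (c, c3) y)) ^ ρ) with hG
  have key : ∀ (x3 : S → X3), ∑ x1 : S × S → X1, (∏ q, k1 q.2 (x1 q)) * relayErr P Q x1 x3 ≤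
      ∑ s, margS P s * G s (x3 s) := by
    intro x3
    simp_rw [relayErr_eq]
    have : ∀ x1 : S × S → X1, ∀ r : S → ℝ, (∏ q, k1 q.2 (x1 q)) * ∑ s, margS P s * r s =
        ∑ s, margS P s * ((∏ q, k1 q.2 (x1 q)) * r s) := by
      intro x1 r
      rw [Finset.mul_sum]
      exact Finset.sum_congr rfl fun s _ => by ring
    simp_rw [this]
    rw [Finset.sum_comm]
    refine Finset.sum_le_sum fun s _ => ?_
    rw [← Finset.mul_sum]
    refine mul_le_mul_of_nonneg_left ?_ (margS_nonneg hP s)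
    refine map_random_coding (fun x1 : S × S → X1 => ∏ q, k1 q.2 (x1 q))
      (fun x1 => Finset.prod_nonneg fun q _ => (hk1 _).1 _) (fun x1 a => x1 (a, s))
      (fun _ c => k1 s c) (fun _ c => (hk1 s).1 c) ?_ ?_ (margSW3 P) (margSW3_nonneg hP)
      (fun c y => chanY3 Q (c, x3 s) y) (fun c y => chanY3_nonneg hQ _ _) _ ?_ hρ0 hρ1
    · intro a c
      rw [sum_pi_prod_mul hk1' (a, s) fun b => if b = c then 1 else 0]
      simp
    · intro a a' c f haa
      rw [sum_pi_prod_mul_mul hk1' (i := (a, s)) (j := (a', s)) (by simpa using haa)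
        (fun b => if b = c then 1 else 0) f]
      simp
    · intro v y
      rw [Finset.sum_mul]
      refine le_of_eq (Finset.sum_congr rfl fun a _ => ?_)
      rw [Finset.mul_sum]
      exact Finset.sum_congr rfl fun c _ => by ring
  calc _ ≤ ∑ x3 : S → X3, (∏ s, k3 s (x3 s)) * ∑ s, margS P s * G s (x3 s) :=
        Finset.sum_le_sum fun x3 _ => mul_le_mul_of_nonneg_left (key x3)
          (Finset.prod_nonneg fun s _ => (hk3 s).1 _)
    _ = ∑ s, ∑ c3, k3 s c3 * (margS P s * G s c3) := by
        simp_rw [Finset.mul_sum]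
        rw [Finset.sum_comm]
        exact Finset.sum_congr rfl fun s _ =>
          sum_pi_prod_mul hk3 s fun c3 => margS P s * G s c3
    _ = _ := by
        simp only [hG, sourceFun, relayFun]
        have hr : ∀ s a v c3 c y, (((∑ a', margSW3 P a' v) *
            ∑ x1', k1 s x1' * chanY3 Q (x1', c3) y) / (margSW3 P a v * chanY3 Q (c, c3) y)) ^ ρ =
            ((∑ a', margSW3 P a' v) / margSW3 P a v) ^ ρ *
            ((∑ x1', k1 s x1' * chanY3 Q (x1', c3) y) / chanY3 Q (c, c3) y) ^ ρ := by
          intro s a v c3 c y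
          rw [mul_div_mul_comm, Real.mul_rpow]
          · exact div_nonneg (Finset.sum_nonneg fun _ _ => margSW3_nonneg hP _ _)
              (margSW3_nonneg hP _ _)
          · exact div_nonneg (Finset.sum_nonneg fun _ _ => mul_nonneg ((hk1 _).1 _)
              (chanY3_nonneg hQ _ _)) (chanY3_nonneg hQ _ _)
        simp_rw [hr]
        rw [Finset.mul_sum]
        refine Finset.sum_congr rfl fun s _ => ?_
        rw [Finset.mul_sum]
        refine Finset.sum_congr rfl fun c3 _ => ?_
        rw [Finset.sum_mul]
        simp_rw [Finset.mul_sum (s := (Finset.univ : Finset S))]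
        refine Finset.sum_congr rfl fun a _ => ?_
        rw [Finset.sum_mul]
        simp_rw [Finset.mul_sum (s := (Finset.univ : Finset W3))]
        refine Finset.sum_congr rfl fun v _ => ?_
        rw [Finset.sum_comm (s := (Finset.univ : Finset X1))]
        simp_rw [Finset.mul_sum]
        refine Finset.sum_congr rfl fun y _ => Finset.sum_congr rfl fun c _ => ?_
        ring

lemma dest_random_coding [DecidableEq S] [DecidableEq X1] [DecidableEq X3] [Nonempty S]
    {P : S × W × W3 → ℝ} (hP : IsPmf P) {Q : X1 × X3 → Y × Y3 → ℝ} (hQ : ∀ x, IsPmf (Q x))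
    {k1 : S → X1 → ℝ} (hk1 : ∀ s, IsPmf (k1 s)) {k3 : S → X3 → ℝ} (hk3 : ∀ s, IsPmf (k3 s))
    {ρ : ℝ} (hρ0 : 0 ≤ ρ) (hρ1 : ρ ≤ 1) :
    ∑ x3 : S → X3, (∏ s, k3 s (x3 s)) * ∑ x1 : S × S → X1, (∏ q, k1 q.2 (x1 q)) *
        destErr P Q x1 x3 ≤
      destFun (margSW P) k1 k3 (chanY Q) ρ := by
  have hk1' : ∀ q : S × S, IsPmf (k1 q.2) := fun q => hk1 q.2
  set ν : (S → X3) × (S × S → X1) → ℝ := fun ω =>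
    (∏ s, k3 s (ω.1 s)) * ∏ q, k1 q.2 (ω.2 q) with hν
  have hsum : ∀ F : (S × S → X1) → (S → X3) → ℝ,
      ∑ x3 : S → X3, (∏ s, k3 s (x3 s)) * ∑ x1 : S × S → X1, (∏ q, k1 q.2 (x1 q)) * F x1 x3 =
      ∑ ω, ν ω * F ω.2 ω.1 := by
    intro F
    rw [Fintype.sum_prod_type]
    simp_rw [hν, Finset.mul_sum, mul_assoc]
  have hprod : ∀ (f1 : (S × S → X1) → ℝ) (f3 : (S → X3) → ℝ),
      ∑ ω, ν ω * (f1 ω.2 * f3 ω.1) =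
      (∑ x3, (∏ s, k3 s (x3 s)) * f3 x3) * ∑ x1, (∏ q, k1 q.2 (x1 q)) * f1 x1 := by
    intro f1 f3
    rw [Fintype.sum_prod_type, Finset.sum_mul]
    simp_rw [hν, Finset.mul_sum]
    exact Finset.sum_congr rfl fun _ _ => Finset.sum_congr rfl fun _ _ => by ring
  have hite : ∀ (a : X1) (b : X3) (c : X1 × X3),
      (if (a, b) = c then (1 : ℝ) else 0) = (if a = c.1 then 1 else 0) *
        if b = c.2 then 1 else 0 := by
    intro a b c
    by_cases h1 : a = c.1 <;> by_cases h2 : b = c.2 <;> simp [Prod.ext_iff, h1, h2]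
  rw [hsum (fun x1 x3 => destErr P Q x1 x3)]
  simp_rw [destErr_eq]
  calc _ = ∑ s', margS P s' * ∑ ω, ν ω * ∑ a, ∑ v, ∑ y,
      margSW P a v * chanY Q (ω.2 (s', a), ω.1 a) y *
        (if argMax (fun a' => margSW P a' v * chanY Q (ω.2 (s', a'), ω.1 a') y) ≠ a
        then 1 else 0) := by
        have : ∀ ω, ∀ r : S → ℝ, ν ω * ∑ s, margS P s * r s =
            ∑ s, margS P s * (ν ω * r s) := by
          intro x1 r
          rw [Finset.mul_sum]
          exact Finset.sum_congr rfl fun s _ => by ring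
        simp_rw [this]
        rw [Finset.sum_comm]
        simp_rw [← Finset.mul_sum]
    _ ≤ ∑ s', margS P s' * destFun (margSW P) k1 k3 (chanY Q) ρ := by
        refine Finset.sum_le_sum fun s' _ => mul_le_mul_of_nonneg_left ?_ (margS_nonneg hP s')
        refine (map_random_coding ν
          (fun ω => mul_nonneg (Finset.prod_nonneg fun s _ => (hk3 s).1 _)
            (Finset.prod_nonneg fun q _ => (hk1 _).1 _))
          (fun ω a => (ω.2 (s', a), ω.1 a)) (fun a c => k1 a c.1 * k3 a c.2)
          (fun a c => mul_nonneg ((hk1 _).1 _) ((hk3 _).1 _)) ?_ ?_ (margSW P) (margSW_nonneg hP)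
          (chanY Q) (chanY_nonneg hQ) (destOut (margSW P) k1 k3 (chanY Q)) ?_ hρ0 hρ1).trans ?_
        · intro a c
          simp_rw [hite]
          rw [hprod (fun x1 => if x1 (s', a) = c.1 then 1 else 0)
            (fun x3 => if x3 a = c.2 then 1 else 0),
            sum_pi_prod_mul hk1' (s', a) fun b => if b = c.1 then 1 else 0,
            sum_pi_prod_mul hk3 a fun b => if b = c.2 then 1 else 0]
          simp [mul_comm]
        · intro a a' c f haa
          have hf : ∀ (x : X1 × X3), f x = ∑ c', f c' *
              ((if x.1 = c'.1 then 1 else 0) * if x.2 = c'.2 then 1 else 0) := by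
            intro x
            simp_rw [← hite]
            simp
          have : ∀ ω : (S → X3) × (S × S → X1), ν ω *
              ((if (ω.2 (s', a), ω.1 a) = c then 1 else 0) * f (ω.2 (s', a'), ω.1 a')) =
              ∑ c', f c' * (ν ω * (((if ω.2 (s', a) = c.1 then 1 else 0) *
                  (if ω.2 (s', a') = c'.1 then 1 else 0)) *
                ((if ω.1 a = c.2 then 1 else 0) * (if ω.1 a' = c'.2 then 1 else 0)))) := by
            intro ω
            rw [hite, hf (ω.2 (s', a'), ω.1 a'), Finset.mul_sum, Finset.mul_sum]
            exact Finset.sum_congr rfl fun c' _ => by ring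
          simp_rw [this]
          rw [Finset.sum_comm, Finset.mul_sum]
          refine Finset.sum_congr rfl fun c' _ => ?_
          rw [← Finset.mul_sum, hprod (fun x1 => (if x1 (s', a) = c.1 then 1 else 0) *
                  (if x1 (s', a') = c'.1 then 1 else 0))
            (fun x3 => (if x3 a = c.2 then 1 else 0) * (if x3 a' = c'.2 then 1 else 0)),
            sum_pi_prod_mul_mul hk1' (i := (s', a)) (j := (s', a')) (by simpa using haa)
              (fun b => if b = c.1 then 1 else 0) (fun b => if b = c'.1 then 1 else 0),
            sum_pi_prod_mul_mul hk3 haa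
              (fun b => if b = c.2 then 1 else 0) (fun b => if b = c'.2 then 1 else 0)]
          simp
          ring
        · intro v y
          refine le_of_eq (Finset.sum_congr rfl fun a _ => ?_)
          rw [Fintype.sum_prod_type]
          exact Finset.sum_congr rfl fun _ _ => Finset.sum_congr rfl fun _ _ => by ring
        · refine le_of_eq (Finset.sum_congr rfl fun a _ => Finset.sum_congr rfl fun v _ => ?_)
          rw [Finset.sum_comm, Fintype.sum_prod_type]
          exact Finset.sum_congr rfl fun _ _ => Finset.sum_congr rfl fun _ _ =>
            Finset.sum_congr rfl fun _ _ => by ring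
    _ = _ := by
        rw [← Finset.sum_mul]
        have : ∑ s, margS P s = 1 := by
          have := sum_mul_eq_margS P fun _ => 1
          simp only [mul_one] at this
          rw [← this, hP.2]
        rw [this, one_mul]

end OneShot

/-- The outputs of a channel used with feedback have total mass one. -/
lemma sum_prod_causal {Z : Type*} [Fintype Z] [Nonempty Z] :
    ∀ {n : ℕ} (q : Fin n → (Fin n → Z) → Z → ℝ), (∀ k y, ∑ z, q k y z = 1) →
      (∀ k y y', (∀ j, j < k → y j = y' j) → q k y = q k y') →
      ∑ y : Fin n → Z, ∏ k, q k y (y k) = 1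
  | 0, q, _, _ => by simp
  | n + 1, q, h1, hc => by
    obtain ⟨z0⟩ := ‹Nonempty Z›
    rw [← (Fin.snocEquiv fun _ => Z).sum_comp, Fintype.sum_prod_type, Finset.sum_comm]
    have hsn : ∀ (y : Fin n → Z) (z : Z),
        ∏ k, q k (Fin.snoc (α := fun _ => Z) y z) (Fin.snoc (α := fun _ => Z) y z k) =
        (∏ k : Fin n, q k.castSucc (Fin.snoc (α := fun _ => Z) y z0) (y k)) *
          q (Fin.last n) (Fin.snoc (α := fun _ => Z) y z0) z := by
      intro y z
      rw [Fin.prod_univ_castSucc]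
      congr 1
      · refine Finset.prod_congr rfl fun k _ => ?_
        rw [Fin.snoc_castSucc]
        refine congrFun (hc _ _ _ fun j hj => ?_) _
        obtain ⟨j, rfl⟩ := Fin.exists_castSucc_eq.2 (hj.trans (Fin.castSucc_lt_last k)).ne
        simp
      · rw [Fin.snoc_last]
        refine congrFun (hc _ _ _ fun j hj => ?_) _
        obtain ⟨j, rfl⟩ := Fin.exists_castSucc_eq.2 hj.ne
        simp
    have hE : ∀ (z : Z) (y : Fin n → Z), (Fin.snocEquiv fun _ => Z) (z, y) =
        Fin.snoc (α := fun _ => Z) y z := fun _ _ => rfl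
    simp only [hE, hsn, ← Finset.mul_sum, h1, mul_one]
    refine sum_prod_causal (fun k y => q k.castSucc (Fin.snoc (α := fun _ => Z) y z0))
      (fun k y => h1 _ _) fun k y y' h => hc _ _ _ fun j hj => ?_
    obtain ⟨j, rfl⟩ := Fin.exists_castSucc_eq.2 (hj.trans (Fin.castSucc_lt_last k)).ne
    simpa using h j (by simpa using hj)

/-- The error probability is at most the probability that an event `good` fails when the relay
is replaced by a relay with inputs `x s1 k`, provided that under `good` the two
relays agree and there is no decoding error. -/
lemma crbcErrProb_le_of_genie {S1 W W3 X1 X3 Y Y3 : Type*}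
    [Fintype S1] [Fintype W] [Fintype W3] [Fintype Y] [Fintype Y3] [DecidableEq S1]
    [Nonempty Y] [Nonempty Y3]
    {pSrc : S1 × W × W3 → ℝ} (hSrc : IsPmf pSrc)
    {Q : X1 × X3 → Y × Y3 → ℝ} (hQ : ∀ x, IsPmf (Q x)) {n : ℕ}
    {f1 : (Fin n → S1) → Fin n → X1} {f3 : Fin n → (Fin n → Y3) → (Fin n → W3) → X3}
    {g3 : (Fin n → Y3) → (Fin n → W3) → Fin n → S1} {g : (Fin n → Y) → (Fin n → W) → Fin n → S1}
    (hc : CausalRelay f3) (x : (Fin n → S1) → Fin n → X3)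
    (bad : (Fin n → S1) → (Fin n → W) → (Fin n → W3) → (Fin n → Y) → (Fin n → Y3) → ℝ)
    (hbad0 : ∀ s w w3 y y3, 0 ≤ bad s w w3 y y3)
    (hbad : ∀ s w w3 y y3, bad s w w3 y y3 < 1 →
      g y w = s ∧ g3 y3 w3 = s ∧ ∀ k, f3 k y3 w3 = x s k) :
    crbcErrProb pSrc Q n f1 f3 g3 g ≤
      ∑ s : Fin n → S1, ∑ w : Fin n → W, ∑ w3 : Fin n → W3, (∏ k, pSrc (s k, w k, w3 k)) *
        ∑ y : Fin n → Y, ∑ y3 : Fin n → Y3,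
          (∏ k, Q (f1 s k, x s k) (y k, y3 k)) * bad s w w3 y y3 := by
  refine Finset.sum_le_sum fun s _ => Finset.sum_le_sum fun w _ => Finset.sum_le_sum fun w3 _ => ?_
  set p := ∏ k, pSrc (s k, w k, w3 k) with hp
  have hp0 : 0 ≤ p := Finset.prod_nonneg fun k _ => hSrc.1 _
  have htot : ∀ u : Fin n → (Fin n → Y3) → X3,
      (∀ k y y', (∀ j, j < k → y j = y' j) → u k y = u k y') →
      ∑ y : Fin n → Y, ∑ y3 : Fin n → Y3, ∏ k, Q (f1 s k, u k y3) (y k, y3 k) = 1 := by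
    intro u hu
    rw [← Fintype.sum_prod_type'
      (f := fun (y : Fin n → Y) (y3 : Fin n → Y3) => ∏ k, Q (f1 s k, u k y3) (y k, y3 k)),
      ← (Equiv.arrowProdEquivProdArrow (Fin n) (fun _ => Y) (fun _ => Y3)).sum_comp]
    refine sum_prod_causal (fun k (z : Fin n → Y × Y3) => Q (f1 s k, u k fun j => (z j).2))
      (fun k y => (hQ _).2) fun k y y' h => ?_
    rw [hu k _ _ fun j hj => congrArg Prod.snd (h j hj)]
  have hreal := htot (fun k y3 => f3 k y3 w3) fun k y y' h => hc k y y' w3 h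
  have hideal := htot (fun k _ => x s k) fun _ _ _ _ => rfl
  have hpt : ∀ y y3, (if g y w ≠ s ∨ g3 y3 w3 ≠ s then
      p * ∏ k, Q (f1 s k, f3 k y3 w3) (y k, y3 k) else 0) ≤
      p * (∏ k, Q (f1 s k, f3 k y3 w3) (y k, y3 k)) - p * (∏ k, Q (f1 s k, x s k) (y k, y3 k)) +
        p * ((∏ k, Q (f1 s k, x s k) (y k, y3 k)) * bad s w w3 y y3) := by
    intro y y3
    have h1 : 0 ≤ ∏ k, Q (f1 s k, f3 k y3 w3) (y k, y3 k) :=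
      Finset.prod_nonneg fun k _ => (hQ _).1 _
    have h2 : 0 ≤ ∏ k, Q (f1 s k, x s k) (y k, y3 k) := Finset.prod_nonneg fun k _ => (hQ _).1 _
    rcases lt_or_ge (bad s w w3 y y3) 1 with hb | hb
    · obtain ⟨e1, e2, e3⟩ := hbad _ _ _ _ _ hb
      simp only [e1, e2, e3, ne_eq, not_true_eq_false, or_self, if_false, sub_self, zero_add]
      exact mul_nonneg hp0 (mul_nonneg h2 (hbad0 _ _ _ _ _))
    · have h3 : p * (∏ k, Q (f1 s k, x s k) (y k, y3 k)) ≤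
          p * ((∏ k, Q (f1 s k, x s k) (y k, y3 k)) * bad s w w3 y y3) :=
        mul_le_mul_of_nonneg_left (le_mul_of_one_le_right h2 hb) hp0
      have h4 := mul_nonneg hp0 h1
      split_ifs <;> linarith
  refine (Finset.sum_le_sum fun y _ => Finset.sum_le_sum fun y3 _ => hpt y y3).trans (le_of_eq ?_)
  simp only [Finset.sum_add_distrib, Finset.sum_sub_distrib, ← Finset.mul_sum]
  rw [hreal, hideal]
  ring

section BlockMarkov

/-- Memoryless extension of the source. -/
noncomputable def blockPmf {S W W3 : Type*} (M : Type*) [Fintype M] (p : S × W × W3 → ℝ) :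
    (M → S) × (M → W) × (M → W3) → ℝ :=
  fun θ => ∏ m, p (θ.1 m, θ.2.1 m, θ.2.2 m)

/-- Memoryless extension of the channel. -/
noncomputable def blockChan {X1 X3 Y Y3 : Type*} (I : Type*) [Fintype I]
    (Q : X1 × X3 → Y × Y3 → ℝ) : (I → X1) × (I → X3) → (I → Y) × (I → Y3) → ℝ :=
  fun x z => ∏ i, Q (x.1 i, x.2 i) (z.1 i, z.2 i)

lemma isPmf_blockPmf {S W W3 M : Type*} [Fintype S] [Fintype W] [Fintype W3] [Fintype M]
    [DecidableEq M] {p : S × W × W3 → ℝ} (hp : IsPmf p) : IsPmf (blockPmf M p) := by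
  refine ⟨fun θ => Finset.prod_nonneg fun m _ => hp.1 _, ?_⟩
  rw [← (isPmf_pi fun _ : M => hp).2,
    ← ((Equiv.arrowProdEquivProdArrow M (fun _ => S) (fun _ => W × W3)).trans
      ((Equiv.refl _).prodCongr
        (Equiv.arrowProdEquivProdArrow M (fun _ => W) (fun _ => W3)))).sum_comp]
  rfl

lemma isPmf_blockChan {X1 X3 Y Y3 I : Type*} [Fintype Y] [Fintype Y3] [Fintype I]
    [DecidableEq I] {Q : X1 × X3 → Y × Y3 → ℝ} (hQ : ∀ x, IsPmf (Q x)) (x : (I → X1) × (I → X3)) :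
    IsPmf (blockChan I Q x) := by
  refine ⟨fun θ => Finset.prod_nonneg fun m _ => (hQ _).1 _, ?_⟩
  rw [← (isPmf_pi fun i : I => hQ (x.1 i, x.2 i)).2,
    ← (Equiv.arrowProdEquivProdArrow I (fun _ => Y) (fun _ => Y3)).sum_comp]
  rfl

/-- Successive block decoding at the relay, starting from the known block `σ`. -/
def relayEst {S V Y : Type*} {B : ℕ} (dec : S → Y → V → S) (σ : S) (y : Fin B → Y)
    (v : Fin B → V) : Fin (B + 1) → S :=
  Fin.induction (motive := fun _ => S) σ fun b s => dec s (y b) (v b)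

lemma relayEst_succ {S V Y : Type*} {B : ℕ} (dec : S → Y → V → S) (σ : S) (y : Fin B → Y)
    (v : Fin B → V) (b : Fin B) :
    relayEst dec σ y v b.succ = dec (relayEst dec σ y v b.castSucc) (y b) (v b) :=
  Fin.induction_succ _ _ _

lemma relayEst_causal {S V Y : Type*} {B : ℕ} (dec : S → Y → V → S) (σ : S) (y y' : Fin B → Y)
    (v : Fin B → V) (b : Fin (B + 1)) (h : ∀ j : Fin B, j.castSucc < b → y j = y' j) :
    relayEst dec σ y v b = relayEst dec σ y' v b := by
  induction b using Fin.induction with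
  | zero => rfl
  | succ b ih =>
    rw [relayEst_succ, relayEst_succ, h b (Fin.castSucc_lt_succ),
      ih fun j hj => h j (hj.trans Fin.castSucc_lt_succ)]

lemma relayEst_eq {S V Y : Type*} {B : ℕ} (dec : S → Y → V → S) (σ : S) (y : Fin B → Y)
    (v : Fin B → V) (s : Fin B → S)
    (h : ∀ b : Fin B, dec (Fin.cons (α := fun _ => S) σ s b.castSucc) (y b) (v b) = s b)
    (b : Fin (B + 1)) : relayEst dec σ y v b = Fin.cons (α := fun _ => S) σ s b := by
  induction b using Fin.induction with
  | zero => rfl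
  | succ b ih => rw [relayEst_succ, ih, h, Fin.cons_succ]

/-- Backward block decoding at the destination, starting from the known last block `σ`. -/
def destEst {S V Y : Type*} {B : ℕ} (dec : S → Y → V → S) (σ : S) (y : Fin B → Y)
    (v : Fin B → V) : Fin (B + 1) → S :=
  Fin.reverseInduction (motive := fun _ => S) σ fun b s => dec s (y b) (v b)

lemma destEst_eq {S V Y : Type*} {B : ℕ} (dec : S → Y → V → S) (σ : S) (y : Fin B → Y)
    (v : Fin B → V) (s : Fin B → S)
    (h : ∀ b : Fin B, dec (Fin.snoc (α := fun _ => S) s σ b.succ) (y b) (v b) = s b)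
    (b : Fin (B + 1)) : destEst dec σ y v b = Fin.snoc (α := fun _ => S) s σ b := by
  induction b using Fin.reverseInduction with
  | last => simp [destEst]
  | cast b ih =>
    rw [Fin.snoc_castSucc, ← h b, ← ih]
    exact Fin.reverseInduction_castSucc _

/-- Splitting of source sequences into blocks. -/
def srcBlocks {S W W3 M : Type*} {B n : ℕ} (e : Fin n ≃ Fin B × M) :
    (Fin B → (M → S) × (M → W) × (M → W3)) ≃ (Fin n → S) × (Fin n → W) × (Fin n → W3) where
  toFun τ := (fun k => (τ (e k).1).1 (e k).2, fun k => (τ (e k).1).2.1 (e k).2,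
    fun k => (τ (e k).1).2.2 (e k).2)
  invFun t b := (fun m => t.1 (e.symm (b, m)), fun m => t.2.1 (e.symm (b, m)),
    fun m => t.2.2 (e.symm (b, m)))
  left_inv τ := by simp
  right_inv t := by simp

/-- Splitting of output sequences into blocks. -/
def outBlocks {Y Y3 I : Type*} {B n : ℕ} (e : Fin n ≃ Fin B × I) :
    (Fin B → (I → Y) × (I → Y3)) ≃ (Fin n → Y) × (Fin n → Y3) where
  toFun τ := (fun k => (τ (e k).1).1 (e k).2, fun k => (τ (e k).1).2 (e k).2)
  invFun t b := (fun i => t.1 (e.symm (b, i)), fun i => t.2 (e.symm (b, i)))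
  left_inv τ := by simp
  right_inv t := by simp

/-- Block-Markov coding with forward decoding at the relay and backward decoding at the
destination; the blocks preceding the first and following the last one are fixed. -/
lemma block_markov {S1 W W3 X1 X3 Y Y3 I M : Type*}
    [Fintype S1] [Fintype W] [Fintype W3] [Fintype Y] [Fintype Y3] [DecidableEq S1]
    [Fintype I] [Fintype M] [DecidableEq I] [DecidableEq M] [Nonempty Y] [Nonempty Y3]
    {pSrc : S1 × W × W3 → ℝ} (hSrc : IsPmf pSrc)
    {Q : X1 × X3 → Y × Y3 → ℝ} (hQ : ∀ x, IsPmf (Q x)) {n B : ℕ}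
    (eT : Fin n ≃ Fin (B + 1) × I) (heT : ∀ j k, (eT j).1 < (eT k).1 → j < k)
    (eS : Fin n ≃ Fin B × M)
    (x1 : (M → S1) × (M → S1) → I → X1) (x3 : (M → S1) → I → X3)
    (decR : (M → S1) → (I → Y3) → (M → W3) → M → S1)
    (decD : (M → S1) → (I → Y) → (M → W) → M → S1) (σ₀ σ₁ : M → S1) :
    ∃ (f1 : (Fin n → S1) → Fin n → X1) (f3 : Fin n → (Fin n → Y3) → (Fin n → W3) → X3)
      (g3 : (Fin n → Y3) → (Fin n → W3) → Fin n → S1)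
      (g : (Fin n → Y) → (Fin n → W) → Fin n → S1),
      CausalRelay f3 ∧ crbcErrProb pSrc Q n f1 f3 g3 g ≤
        ∑ τ : Fin B → (M → S1) × (M → W) × (M → W3), (∏ b, blockPmf M pSrc (τ b)) * ∑ b : Fin B,
          ((fun s θ' => ∑ z, blockChan I Q (x1 (θ'.1, s), x3 s) z *
              if decR s z.2 θ'.2.2 ≠ θ'.1 then 1 else 0)
            (Fin.cons (α := fun _ => M → S1) σ₀ (fun b => (τ b).1) b.castSucc) (τ b) +
          (fun θ s' => ∑ z, blockChan I Q (x1 (s', θ.1), x3 θ.1) z *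
              if decD s' z.1 θ.2.1 ≠ θ.1 then 1 else 0)
            (τ b) (Fin.snoc (α := fun _ => M → S1) (fun b => (τ b).1) σ₁ b.succ)) := by
  set sb : (Fin n → S1) → Fin B → M → S1 := fun s b m => s (eS.symm (b, m)) with hsb
  set wb : (Fin n → W) → Fin B → M → W := fun s b m => s (eS.symm (b, m)) with hwb
  set w3b : (Fin n → W3) → Fin B → M → W3 := fun s b m => s (eS.symm (b, m)) with hw3b
  set yb : (Fin n → Y) → Fin (B + 1) → I → Y := fun s b i => s (eT.symm (b, i)) with hyb
  set y3b : (Fin n → Y3) → Fin (B + 1) → I → Y3 := fun s b i => s (eT.symm (b, i)) with hy3b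
  set prev : (Fin B → M → S1) → Fin (B + 1) → M → S1 :=
    fun s => Fin.cons (α := fun _ => M → S1) σ₀ s with hprev
  set next : (Fin B → M → S1) → Fin (B + 1) → M → S1 :=
    fun s => Fin.snoc (α := fun _ => M → S1) s σ₁ with hnext
  set f1 : (Fin n → S1) → Fin n → X1 := fun s k =>
    x1 (next (sb s) (eT k).1, prev (sb s) (eT k).1) (eT k).2 with hf1
  set est : (Fin n → Y3) → (Fin n → W3) → Fin (B + 1) → M → S1 := fun y3 w3 =>
    relayEst decR σ₀ (fun b => y3b y3 b.castSucc) (w3b w3) with hest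
  set estD : (Fin n → Y) → (Fin n → W) → Fin (B + 1) → M → S1 := fun y w =>
    destEst decD σ₁ (fun b => yb y b.succ) (wb w) with hestD
  have hcausal : CausalRelay (n := n) fun k y3 (w3 : Fin n → W3) =>
      x3 (est y3 w3 (eT k).1) (eT k).2 := by
    intro k y y' w3 h
    have : est y w3 (eT k).1 = est y' w3 (eT k).1 := by
      refine relayEst_causal _ _ _ _ _ _ fun j hj => funext fun i => h _ (heT _ _ ?_)
      simpa using hj
    simp only [this]
  refine ⟨f1, fun k y3 w3 => x3 (est y3 w3 (eT k).1) (eT k).2,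
    fun y3 w3 k => est y3 w3 (eS k).1.succ (eS k).2,
    fun y w k => estD y w (eS k).1.castSucc (eS k).2, hcausal, ?_⟩
  set badR : (Fin n → S1) → (Fin n → W3) → (Fin n → Y3) → Fin B → ℝ := fun s w3 y3 b =>
    if decR (prev (sb s) b.castSucc) (y3b y3 b.castSucc) (w3b w3 b) ≠ sb s b then 1 else 0
    with hbadR
  set badD : (Fin n → S1) → (Fin n → W) → (Fin n → Y) → Fin B → ℝ := fun s w y b =>
    if decD (next (sb s) b.succ) (yb y b.succ) (wb w b) ≠ sb s b then 1 else 0 with hbadD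
  have hR0 : ∀ s w3 y3 b, 0 ≤ badR s w3 y3 b := by
    intro s w3 y3 b; simp only [hbadR]; split_ifs <;> norm_num
  have hD0 : ∀ s w y b, 0 ≤ badD s w y b := by
    intro s w3 y3 b; simp only [hbadD]; split_ifs <;> norm_num
  refine (crbcErrProb_le_of_genie hSrc hQ hcausal (fun s k => x3 (prev (sb s) (eT k).1) (eT k).2)
    (fun s w w3 y y3 => ∑ b, (badR s w3 y3 b + badD s w y b))
    (fun s w w3 y y3 => Finset.sum_nonneg fun b _ => add_nonneg (hR0 _ _ _ _) (hD0 _ _ _ _))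
    ?_).trans (le_of_eq ?_)
  · intro s w w3 y y3 hlt
    have hle : ∀ b, badR s w3 y3 b + badD s w y b < 1 := fun b =>
      (Finset.single_le_sum (f := fun b => badR s w3 y3 b + badD s w y b)
        (fun b _ => add_nonneg (hR0 _ _ _ _) (hD0 _ _ _ _)) (Finset.mem_univ b)).trans_lt hlt
    have hR : ∀ b : Fin B,
        decR (prev (sb s) b.castSucc) (y3b y3 b.castSucc) (w3b w3 b) = sb s b := by
      intro b
      by_contra hne
      have h1 : badR s w3 y3 b = 1 := if_pos hne
      linarith [hle b, hD0 s w y b]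
    have hD : ∀ b : Fin B, decD (next (sb s) b.succ) (yb y b.succ) (wb w b) = sb s b := by
      intro b
      by_contra hne
      have h1 : badD s w y b = 1 := if_pos hne
      linarith [hle b, hR0 s w3 y3 b]
    have e1 : ∀ b, est y3 w3 b = prev (sb s) b := relayEst_eq _ _ _ _ _ hR
    have e2 : ∀ b, estD y w b = next (sb s) b := destEst_eq _ _ _ _ _ hD
    refine ⟨funext fun k => ?_, funext fun k => ?_, fun k => ?_⟩
    · simp [e2, hnext, hsb]
    · simp [e1, hprev, hsb]
    · simp only [e1]
  · have hconv : ∀ F : (Fin n → S1) → (Fin n → W) → (Fin n → W3) → ℝ,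
        ∑ s, ∑ w, ∑ w3, F s w w3 = ∑ τ, F (srcBlocks eS τ).1 (srcBlocks eS τ).2.1
          (srcBlocks eS τ).2.2 := by
      intro F
      rw [(srcBlocks eS).sum_comp (fun t => F t.1 t.2.1 t.2.2)]
      simp only [Fintype.sum_prod_type]
    have hconv' : ∀ F : (Fin n → Y) → (Fin n → Y3) → ℝ,
        ∑ y, ∑ y3, F y y3 = ∑ z, F (outBlocks eT z).1 (outBlocks eT z).2 := by
      intro F
      rw [(outBlocks eT).sum_comp (fun t => F t.1 t.2)]
      simp only [Fintype.sum_prod_type]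
    rw [hconv]
    refine Finset.sum_congr rfl fun τ _ => ?_
    have hp : ∏ k, pSrc ((srcBlocks eS τ).1 k, (srcBlocks eS τ).2.1 k, (srcBlocks eS τ).2.2 k) =
        ∏ b, blockPmf M pSrc (τ b) := by
      simp only [blockPmf, ← Fintype.prod_prod_type', srcBlocks, Equiv.coe_fn_mk]
      exact eS.prod_comp fun q => pSrc ((τ q.1).1 q.2, (τ q.1).2.1 q.2, (τ q.1).2.2 q.2)
    rw [hp, hconv']
    congr 1
    have hs : sb (srcBlocks eS τ).1 = fun b => (τ b).1 := by
      ext b m; simp [hsb, srcBlocks]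
    have hw : wb (srcBlocks eS τ).2.1 = fun b => (τ b).2.1 := by
      ext b m; simp [hwb, srcBlocks]
    have hw3 : w3b (srcBlocks eS τ).2.2 = fun b => (τ b).2.2 := by
      ext b m; simp [hw3b, srcBlocks]
    have hy : ∀ z : Fin (B + 1) → (I → Y) × (I → Y3), yb (outBlocks eT z).1 = fun b => (z b).1 := by
      intro z; ext b m; simp [hyb, outBlocks]
    have hy3 : ∀ z : Fin (B + 1) → (I → Y) × (I → Y3), y3b (outBlocks eT z).2 = fun b => (z b).2 := by
      intro z; ext b m; simp [hy3b, outBlocks]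
    set sτ : Fin B → M → S1 := fun b => (τ b).1 with hsτ
    have hq : ∀ z : Fin (B + 1) → (I → Y) × (I → Y3),
        ∏ k, Q (f1 (srcBlocks eS τ).1 k, x3 (prev (sb (srcBlocks eS τ).1) (eT k).1) (eT k).2)
          ((outBlocks eT z).1 k, (outBlocks eT z).2 k) =
        ∏ b, blockChan I Q (x1 (next sτ b, prev sτ b), x3 (prev sτ b)) (z b) := by
      intro z
      simp only [blockChan, ← Fintype.prod_prod_type', outBlocks, Equiv.coe_fn_mk, hf1, hs]
      exact eT.prod_comp fun q => Q (x1 (next sτ q.1, prev sτ q.1) q.2, x3 (prev sτ q.1) q.2)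
        ((z q.1).1 q.2, (z q.1).2 q.2)
    simp_rw [hq, Finset.mul_sum]
    rw [Finset.sum_comm]
    refine Finset.sum_congr rfl fun b _ => ?_
    simp_rw [mul_add]
    rw [Finset.sum_add_distrib]
    have hpm : ∀ b, IsPmf (blockChan I Q (x1 (next sτ b, prev sτ b), x3 (prev sτ b))) :=
      fun b => isPmf_blockChan hQ _
    congr 1
    · simp only [hbadR, hs, hw3, hy3]
      rw [sum_pi_prod_mul hpm b.castSucc fun z =>
        if decR (prev sτ b.castSucc) z.2 (τ b).2.2 ≠ sτ b then 1 else 0]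
      simp [hnext, hprev, hsτ]
    · simp only [hbadD, hs, hw, hy]
      rw [sum_pi_prod_mul hpm b.succ fun z =>
        if decD (next sτ b.succ) z.1 (τ b).2.1 ≠ sτ b then 1 else 0]
      simp [hnext, hprev, hsτ]

end BlockMarkov

lemma exists_le_of_sum_mul_le {α : Type*} [Fintype α] {p : α → ℝ} (hp : IsPmf p) {f : α → ℝ}
    {c : ℝ} (h : ∑ a, p a * f a ≤ c) : ∃ a, f a ≤ c := by
  by_contra! hlt
  have hnn : ∀ a ∈ Finset.univ, 0 ≤ p a * (f a - c) := fun a _ =>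
    mul_nonneg (hp.1 a) (sub_nonneg.2 (hlt a).le)
  have hsum : ∑ a, p a * (f a - c) ≤ 0 := by
    simp_rw [mul_sub]
    rw [Finset.sum_sub_distrib, ← Finset.sum_mul, hp.2]
    linarith
  have h0 := (Finset.sum_eq_zero_iff_of_nonneg hnn).1
    (le_antisymm hsum (Finset.sum_nonneg hnn))
  have : ∑ a, p a = 0 := Finset.sum_eq_zero fun a ha =>
    (mul_eq_zero.1 (h0 a ha)).resolve_right (sub_pos.2 (hlt a)).ne'
  linarith [hp.2]

lemma sum_cons_chain {Θ S : Type*} [Fintype Θ] {P : Θ → ℝ} (hP : IsPmf P) (π : Θ → S)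
    (G : S → Θ → ℝ) {B : ℕ} (b : Fin B) :
    ∑ θ₀, P θ₀ * ∑ τ : Fin B → Θ, (∏ j, P (τ j)) *
        G (Fin.cons (α := fun _ => S) (π θ₀) (fun j => π (τ j)) b.castSucc) (τ b) =
      ∑ θ, ∑ θ', P θ * P θ' * G (π θ) θ' := by
  rw [← sum_pi_prod_mul₂ (fun _ : Fin (B + 1) => hP) (Fin.castSucc_lt_succ (i := b)).ne
    fun θ θ' => G (π θ) θ', ← (Fin.consEquiv fun _ : Fin (B + 1) => Θ).sum_comp,
    Fintype.sum_prod_type]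
  refine Finset.sum_congr rfl fun θ₀ _ => ?_
  rw [Finset.mul_sum]
  refine Finset.sum_congr rfl fun τ _ => ?_
  have hE : (Fin.consEquiv fun _ : Fin (B + 1) => Θ) (θ₀, τ) =
      Fin.cons (α := fun _ => Θ) θ₀ τ := rfl
  have hc : ∀ j : Fin (B + 1), Fin.cons (α := fun _ => S) (π θ₀) (fun j => π (τ j)) j =
      π (Fin.cons (α := fun _ => Θ) θ₀ τ j) := by
    intro j
    cases j using Fin.cases <;> simp
  rw [hE, hc, Fin.prod_univ_succ]
  simp [mul_assoc]

lemma sum_snoc_chain {Θ S : Type*} [Fintype Θ] {P : Θ → ℝ} (hP : IsPmf P) (π : Θ → S)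
    (G : Θ → S → ℝ) {B : ℕ} (b : Fin B) :
    ∑ θ₁, P θ₁ * ∑ τ : Fin B → Θ, (∏ j, P (τ j)) *
        G (τ b) (Fin.snoc (α := fun _ => S) (fun j => π (τ j)) (π θ₁) b.succ) =
      ∑ θ, ∑ θ', P θ * P θ' * G θ (π θ') := by
  rw [← sum_pi_prod_mul₂ (fun _ : Fin (B + 1) => hP) (Fin.castSucc_lt_succ (i := b)).ne
    fun θ θ' => G θ (π θ'), ← (Fin.snocEquiv fun _ : Fin (B + 1) => Θ).sum_comp,
    Fintype.sum_prod_type]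
  refine Finset.sum_congr rfl fun θ₁ _ => ?_
  rw [Finset.mul_sum]
  refine Finset.sum_congr rfl fun τ _ => ?_
  have hE : (Fin.snocEquiv fun _ : Fin (B + 1) => Θ) (θ₁, τ) =
      Fin.snoc (α := fun _ => Θ) τ θ₁ := rfl
  have hc : ∀ j : Fin (B + 1), Fin.snoc (α := fun _ => S) (fun j => π (τ j)) (π θ₁) j =
      π (Fin.snoc (α := fun _ => Θ) τ θ₁ j) := by
    intro j
    cases j using Fin.lastCases <;> simp
  rw [hE, hc, Fin.prod_univ_castSucc]
  simp
  ring

/-- Existence of a code whose error probability is bounded by the random coding bounds of the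
blocks. -/
lemma exists_code {S1 W W3 X1 X3 Y Y3 I M : Type*}
    [Fintype S1] [Fintype W] [Fintype W3] [Fintype X1] [Fintype X3] [Fintype Y] [Fintype Y3]
    [DecidableEq S1] [DecidableEq X1] [DecidableEq X3] [Nonempty S1] [Nonempty Y] [Nonempty Y3]
    [Fintype I] [Fintype M] [DecidableEq I] [DecidableEq M]
    {pSrc : S1 × W × W3 → ℝ} (hSrc : IsPmf pSrc)
    {Q : X1 × X3 → Y × Y3 → ℝ} (hQ : ∀ x, IsPmf (Q x)) {n B : ℕ}
    (eT : Fin n ≃ Fin (B + 1) × I) (heT : ∀ j k, (eT j).1 < (eT k).1 → j < k)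
    (eS : Fin n ≃ Fin B × M)
    {k1 : (M → S1) → (I → X1) → ℝ} (hk1 : ∀ s, IsPmf (k1 s))
    {k3 : (M → S1) → (I → X3) → ℝ} (hk3 : ∀ s, IsPmf (k3 s))
    {ρ ρ' : ℝ} (hρ0 : 0 ≤ ρ) (hρ1 : ρ ≤ 1) (hρ0' : 0 ≤ ρ') (hρ1' : ρ' ≤ 1) :
    ∃ (f1 : (Fin n → S1) → Fin n → X1) (f3 : Fin n → (Fin n → Y3) → (Fin n → W3) → X3)
      (g3 : (Fin n → Y3) → (Fin n → W3) → Fin n → S1)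
      (g : (Fin n → Y) → (Fin n → W) → Fin n → S1),
      CausalRelay f3 ∧ crbcErrProb pSrc Q n f1 f3 g3 g ≤
        B * (sourceFun (margSW3 (blockPmf M pSrc)) ρ *
            relayFun (margS (blockPmf M pSrc)) k1 k3 (chanY3 (blockChan I Q)) ρ +
          destFun (margSW (blockPmf M pSrc)) k1 k3 (chanY (blockChan I Q)) ρ') := by
  classical
  set P := blockPmf M pSrc with hPdef
  have hP : IsPmf P := isPmf_blockPmf hSrc
  have hQb : ∀ x, IsPmf (blockChan I Q x) := isPmf_blockChan hQ
  have havg := add_le_add (relay_random_coding hP hQb hk1 hk3 hρ0 hρ1)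
    (dest_random_coding hP hQb hk1 hk3 hρ0' hρ1')
  rw [← Finset.sum_add_distrib] at havg
  simp_rw [← mul_add, ← Finset.sum_add_distrib, ← mul_add] at havg
  obtain ⟨x3, hx3⟩ := exists_le_of_sum_mul_le (isPmf_pi hk3) havg
  obtain ⟨x1, hx1⟩ := exists_le_of_sum_mul_le
    (isPmf_pi fun q : (M → S1) × (M → S1) => hk1 q.2) hx3
  have hB := mul_le_mul_of_nonneg_left hx1 (Nat.cast_nonneg B : (0 : ℝ) ≤ B)
  set GR : (M → S1) → (M → S1) × (M → W) × (M → W3) → ℝ := fun s θ' =>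
    ∑ z, blockChan I Q (x1 (θ'.1, s), x3 s) z *
      if relayDec P (blockChan I Q) x1 x3 s z.2 θ'.2.2 ≠ θ'.1 then 1 else 0 with hGR
  set GD : (M → S1) × (M → W) × (M → W3) → (M → S1) → ℝ := fun θ s' =>
    ∑ z, blockChan I Q (x1 (s', θ.1), x3 θ.1) z *
      if destDec P (blockChan I Q) x1 x3 s' z.1 θ.2.1 ≠ θ.1 then 1 else 0 with hGD
  have hsum : ∑ θ₀, P θ₀ * ∑ θ₁, P θ₁ *
      ∑ τ : Fin B → (M → S1) × (M → W) × (M → W3), (∏ b, P (τ b)) * ∑ b : Fin B,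
        (GR (Fin.cons (α := fun _ => M → S1) θ₀.1 (fun b => (τ b).1) b.castSucc) (τ b) +
          GD (τ b) (Fin.snoc (α := fun _ => M → S1) (fun b => (τ b).1) θ₁.1 b.succ)) =
      B * (relayErr P (blockChan I Q) x1 x3 + destErr P (blockChan I Q) x1 x3) := by
    have hR := fun b : Fin B => sum_cons_chain hP Prod.fst GR b
    have hD := fun b : Fin B => sum_snoc_chain hP Prod.fst GD b
    simp_rw [Finset.mul_sum (s := (Finset.univ : Finset (Fin B)))]
    have h1 : ∀ (F : ((M → S1) × (M → W) × (M → W3)) →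
        (Fin B → (M → S1) × (M → W) × (M → W3)) → Fin B → ℝ) θ,
        P θ * ∑ τ, ∑ b, F θ τ b = ∑ b, P θ * ∑ τ, F θ τ b := by
      intro F θ
      rw [Finset.sum_comm, Finset.mul_sum]
    have h2 : ∀ θ₀ : (M → S1) × (M → W) × (M → W3), ∑ θ₁, P θ₁ *
        ∑ τ : Fin B → (M → S1) × (M → W) × (M → W3), ∑ b : Fin B,
        (∏ b, P (τ b)) *
        (GR (Fin.cons (α := fun _ => M → S1) θ₀.1 (fun b => (τ b).1) b.castSucc) (τ b) +
          GD (τ b) (Fin.snoc (α := fun _ => M → S1) (fun b => (τ b).1) θ₁.1 b.succ)) =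
        ∑ b : Fin B, ((∑ τ : Fin B → (M → S1) × (M → W) × (M → W3), (∏ b, P (τ b)) *
          GR (Fin.cons (α := fun _ => M → S1) θ₀.1 (fun b => (τ b).1) b.castSucc) (τ b)) +
          destErr P (blockChan I Q) x1 x3) := by
      intro θ₀
      rw [Finset.sum_congr rfl fun θ₁ _ => h1 (fun θ₁ τ b => (∏ b, P (τ b)) *
        (GR (Fin.cons (α := fun _ => M → S1) θ₀.1 (fun b => (τ b).1) b.castSucc) (τ b) +
          GD (τ b) (Fin.snoc (α := fun _ => M → S1) (fun b => (τ b).1) θ₁.1 b.succ))) θ₁,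
        Finset.sum_comm]
      refine Finset.sum_congr rfl fun b _ => ?_
      simp_rw [mul_add, Finset.sum_add_distrib, mul_add]
      rw [Finset.sum_add_distrib, ← Finset.sum_mul, hP.2, one_mul]
      congr 1
      exact hD b
    simp_rw [h2]
    simp_rw [Finset.mul_sum (s := (Finset.univ : Finset (Fin B)))]
    rw [Finset.sum_comm]
    simp_rw [mul_add, Finset.sum_add_distrib]
    congr 1
    · rw [Finset.sum_congr rfl fun b _ => hR b]
      simp [relayErr, hGR]
    · rw [Finset.sum_comm]
      simp [← Finset.sum_mul, ← Finset.mul_sum, hP.2]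
  rw [← hsum] at hB
  obtain ⟨θ₀, h₀⟩ := exists_le_of_sum_mul_le hP hB
  obtain ⟨θ₁, h₁⟩ := exists_le_of_sum_mul_le hP h₀
  obtain ⟨f1, f3, g3, g, hc, hle⟩ := block_markov hSrc hQ eT heT eS x1 x3
    (relayDec P (blockChan I Q) x1 x3) (destDec P (blockChan I Q) x1 x3) θ₀.1 θ₁.1
  refine ⟨f1, f3, g3, g, hc, hle.trans ?_⟩
  convert h₁ using 1

section Tensorization

/-- Sum over pairs of tuples of a product of functions of the coordinates. -/
lemma sum_sum_pi_prod {ι α β : Type*} [Fintype ι] [DecidableEq ι] [Fintype α] [Fintype β]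
    (f : ι → α → β → ℝ) :
    ∑ x : ι → α, ∑ y : ι → β, ∏ i, f i (x i) (y i) = ∏ i, ∑ a, ∑ b, f i a b := by
  rw [← sum_pi_prod fun i a => ∑ b, f i a b]
  exact Finset.sum_congr rfl fun x _ => sum_pi_prod fun i b => f i (x i) b

/-- Sum over triples of tuples of a product of functions of the coordinates. -/
lemma sum_sum_sum_pi_prod {ι α β γ : Type*} [Fintype ι] [DecidableEq ι] [Fintype α] [Fintype β]
    [Fintype γ] (f : ι → α → β → γ → ℝ) :
    ∑ x : ι → α, ∑ y : ι → β, ∑ z : ι → γ, ∏ i, f i (x i) (y i) (z i) =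
      ∏ i, ∑ a, ∑ b, ∑ c, f i a b c := by
  rw [← sum_pi_prod fun i a => ∑ b, ∑ c, f i a b c]
  exact Finset.sum_congr rfl fun x _ => sum_sum_pi_prod fun i b c => f i (x i) b c

/-- Sum over tuples indexed by a disjoint union. -/
lemma sum_pi_sum_prod {I J α : Type*} [Fintype I] [Fintype J] [DecidableEq I] [DecidableEq J]
    [Fintype α] (f : I → α → ℝ) (g : J → α → ℝ) :
    ∑ x : I ⊕ J → α, (∏ i, f i (x (Sum.inl i))) * ∏ j, g j (x (Sum.inr j)) =
      (∏ i, ∑ a, f i a) * ∏ j, ∑ a, g j a := by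
  have h := sum_pi_prod (fun m : I ⊕ J => Sum.elim f g m)
  simp only [Fintype.prod_sum_type, Sum.elim_inl, Sum.elim_inr] at h
  exact h

/-- Sum over pairs of tuples indexed by a disjoint union. -/
lemma sum_sum_pi_sum_prod {I J α β : Type*} [Fintype I] [Fintype J] [DecidableEq I]
    [DecidableEq J] [Fintype α] [Fintype β] (f : I → α → β → ℝ) (g : J → α → β → ℝ) :
    ∑ x : I ⊕ J → α, ∑ y : I ⊕ J → β, (∏ i, f i (x (Sum.inl i)) (y (Sum.inl i))) *
        ∏ j, g j (x (Sum.inr j)) (y (Sum.inr j)) =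
      (∏ i, ∑ a, ∑ b, f i a b) * ∏ j, ∑ a, ∑ b, g j a b := by
  rw [← sum_pi_sum_prod (fun i a => ∑ b, f i a b) fun j a => ∑ b, g j a b]
  exact Finset.sum_congr rfl fun x _ =>
    sum_pi_sum_prod (fun i b => f i (x (Sum.inl i)) b) fun j b => g j (x (Sum.inr j)) b

variable {S W W3 X1 X3 Y Y3 I J M : Type*}

lemma margS_blockPmf [Fintype W] [Fintype W3] [Fintype M] [DecidableEq M]
    (p : S × W × W3 → ℝ) (s : M → S) :
    margS (blockPmf M p) s = ∏ m, margS p (s m) :=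
  sum_sum_pi_prod fun m w w3 => p (s m, w, w3)

lemma margSW_blockPmf [Fintype W3] [Fintype M] [DecidableEq M]
    (p : S × W × W3 → ℝ) (s : M → S) (w : M → W) :
    margSW (blockPmf M p) s w = ∏ m, margSW p (s m) (w m) :=
  sum_pi_prod fun m w3 => p (s m, w m, w3)

lemma margSW3_blockPmf [Fintype W] [Fintype M] [DecidableEq M]
    (p : S × W × W3 → ℝ) (s : M → S) (w3 : M → W3) :
    margSW3 (blockPmf M p) s w3 = ∏ m, margSW3 p (s m) (w3 m) :=
  sum_pi_prod fun m w => p (s m, w, w3 m)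

lemma chanY_blockChan [Fintype Y3] [Fintype I] [DecidableEq I]
    (Q : X1 × X3 → Y × Y3 → ℝ) (x : (I → X1) × (I → X3)) (y : I → Y) :
    chanY (blockChan I Q) x y = ∏ i, chanY Q (x.1 i, x.2 i) (y i) :=
  sum_pi_prod fun i y3 => Q (x.1 i, x.2 i) (y i, y3)

lemma chanY3_blockChan [Fintype Y] [Fintype I] [DecidableEq I]
    (Q : X1 × X3 → Y × Y3 → ℝ) (x : (I → X1) × (I → X3)) (y3 : I → Y3) :
    chanY3 (blockChan I Q) x y3 = ∏ i, chanY3 Q (x.1 i, x.2 i) (y3 i) :=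
  sum_pi_prod fun i y => Q (x.1 i, x.2 i) (y, y3 i)

lemma sourceFun_prod [Fintype S] [Fintype W] [Fintype M] [DecidableEq M]
    {q : S → W → ℝ} (hq : ∀ s w, 0 ≤ q s w) (ρ : ℝ) :
    sourceFun (fun (s : M → S) (w : M → W) => ∏ m, q (s m) (w m)) ρ =
      sourceFun q ρ ^ Fintype.card M := by
  have h : ∀ (s : M → S) (w : M → W),
      (∏ m, q (s m) (w m)) *
        ((∑ s' : M → S, ∏ m, q (s' m) (w m)) / ∏ m, q (s m) (w m)) ^ ρ =
      ∏ m, q (s m) (w m) * ((∑ a, q a (w m)) / q (s m) (w m)) ^ ρ := by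
    intro s w
    rw [sum_pi_prod fun m a => q a (w m), ← Finset.prod_div_distrib,
      ← Real.finsetProd_rpow _ _ fun m _ => div_nonneg
        (Finset.sum_nonneg fun a _ => hq a (w m)) (hq _ _), Finset.prod_mul_distrib]
  simp only [sourceFun, h]
  rw [sum_sum_pi_prod fun (_ : M) s w => q s w * ((∑ a, q a w) / q s w) ^ ρ]
  simp

/-- Memoryless kernel that uses the coordinates of the source block in `I` only. -/
noncomputable def blockKernel {X : Type*} (I J : Type*) [Fintype I] (k : S → X → ℝ)
    (s : I ⊕ J → S) (x : I → X) : ℝ :=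
  ∏ i, k (s (Sum.inl i)) (x i)

lemma isPmf_blockKernel [Fintype X1] [Fintype I] [DecidableEq I]
    {k : S → X1 → ℝ} (hk : ∀ s, IsPmf (k s)) (s : I ⊕ J → S) :
    IsPmf (blockKernel I J k s) :=
  isPmf_pi fun i => hk (s (Sum.inl i))

lemma relayFun_prod [Fintype S] [Fintype X1] [Fintype X3] [Fintype Y]
    [Fintype I] [DecidableEq I] [Fintype J] [DecidableEq J]
    {pS : S → ℝ} (hpS : ∑ s, pS s = 1) {k1 : S → X1 → ℝ} {k3 : S → X3 → ℝ}
    (hk1 : ∀ s x, 0 ≤ k1 s x) {L : X1 × X3 → Y → ℝ} (hL : ∀ x y, 0 ≤ L x y) (ρ : ℝ) :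
    relayFun (fun s : I ⊕ J → S => ∏ m, pS (s m)) (blockKernel I J k1) (blockKernel I J k3)
        (fun (x : (I → X1) × (I → X3)) (y : I → Y) => ∏ i, L (x.1 i, x.2 i) (y i)) ρ =
      relayFun pS k1 k3 L ρ ^ Fintype.card I := by
  have h : ∀ s : I ⊕ J → S, ∑ x3 : I → X3, ∑ x1 : I → X1, ∑ y : I → Y,
      (∏ m, pS (s m)) * blockKernel I J k3 s x3 * blockKernel I J k1 s x1 *
        (∏ i, L (x1 i, x3 i) (y i)) *
        ((∑ x1' : I → X1, blockKernel I J k1 s x1' * ∏ i, L (x1' i, x3 i) (y i)) /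
          ∏ i, L (x1 i, x3 i) (y i)) ^ ρ =
      (∏ i, ∑ x3, ∑ x1, ∑ y, pS (s (Sum.inl i)) * k3 (s (Sum.inl i)) x3 *
        k1 (s (Sum.inl i)) x1 * L (x1, x3) y *
        ((∑ x1', k1 (s (Sum.inl i)) x1' * L (x1', x3) y) / L (x1, x3) y) ^ ρ) *
      ∏ j, pS (s (Sum.inr j)) := by
    intro s
    rw [← sum_sum_sum_pi_prod fun i x3 x1 y => pS (s (Sum.inl i)) * k3 (s (Sum.inl i)) x3 *
        k1 (s (Sum.inl i)) x1 * L (x1, x3) y *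
        ((∑ x1', k1 (s (Sum.inl i)) x1' * L (x1', x3) y) / L (x1, x3) y) ^ ρ]
    simp_rw [Finset.sum_mul]
    refine Finset.sum_congr rfl fun x3 _ => Finset.sum_congr rfl fun x1 _ =>
      Finset.sum_congr rfl fun y _ => ?_
    have hsum : ∑ x1' : I → X1, blockKernel I J k1 s x1' * ∏ i, L (x1' i, x3 i) (y i) =
        ∏ i, ∑ x1', k1 (s (Sum.inl i)) x1' * L (x1', x3 i) (y i) := by
      simp only [blockKernel, ← Finset.prod_mul_distrib]
      exact sum_pi_prod fun i x1' => k1 (s (Sum.inl i)) x1' * L (x1', x3 i) (y i)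
    rw [hsum, ← Finset.prod_div_distrib, ← Real.finsetProd_rpow _ _ fun i _ => div_nonneg
      (Finset.sum_nonneg fun a _ => mul_nonneg (hk1 _ _) (hL _ _)) (hL _ _)]
    simp only [blockKernel, Fintype.prod_sum_type, Finset.prod_mul_distrib]
    ring
  simp only [relayFun, h]
  rw [sum_pi_sum_prod (fun (_ : I) s => ∑ x3, ∑ x1, ∑ y, pS s * k3 s x3 * k1 s x1 *
    L (x1, x3) y * ((∑ x1', k1 s x1' * L (x1', x3) y) / L (x1, x3) y) ^ ρ) fun _ s => pS s]
  simp [hpS]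

lemma destOut_prod [Fintype S] [Fintype X1] [Fintype X3]
    [Fintype I] [DecidableEq I] [Fintype J] [DecidableEq J]
    (q : S → W → ℝ) (k1 : S → X1 → ℝ) (k3 : S → X3 → ℝ)
    (L : X1 × X3 → Y → ℝ) (w : I ⊕ J → W) (y : I → Y) :
    destOut (fun (s : I ⊕ J → S) (w : I ⊕ J → W) => ∏ m, q (s m) (w m))
        (blockKernel I J k1) (blockKernel I J k3)
        (fun (x : (I → X1) × (I → X3)) (y : I → Y) => ∏ i, L (x.1 i, x.2 i) (y i)) w y =
      (∏ i, destOut q k1 k3 L (w (Sum.inl i)) (y i)) * ∏ j, ∑ s, q s (w (Sum.inr j)) := by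
  simp only [destOut]
  rw [← sum_pi_sum_prod (fun i s => ∑ x1, ∑ x3, q s (w (Sum.inl i)) * k1 s x1 * k3 s x3 *
    L (x1, x3) (y i)) fun j s => q s (w (Sum.inr j))]
  refine Finset.sum_congr rfl fun s _ => ?_
  rw [← sum_sum_pi_prod fun i x1 x3 => q (s (Sum.inl i)) (w (Sum.inl i)) *
    k1 (s (Sum.inl i)) x1 * k3 (s (Sum.inl i)) x3 * L (x1, x3) (y i)]
  simp_rw [Finset.sum_mul]
  refine Finset.sum_congr rfl fun x1 _ => Finset.sum_congr rfl fun x3 _ => ?_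
  simp only [blockKernel, Fintype.prod_sum_type, Finset.prod_mul_distrib]
  ring

lemma destOut_nonneg [Fintype S] [Fintype X1] [Fintype X3]
    {q : S → W → ℝ} (hq : ∀ s w, 0 ≤ q s w) {k1 : S → X1 → ℝ}
    {k3 : S → X3 → ℝ} (hk1 : ∀ s x, 0 ≤ k1 s x) (hk3 : ∀ s x, 0 ≤ k3 s x)
    {L : X1 × X3 → Y → ℝ} (hL : ∀ x y, 0 ≤ L x y) (w : W) (y : Y) :
    0 ≤ destOut q k1 k3 L w y :=
  Finset.sum_nonneg fun _ _ => Finset.sum_nonneg fun _ _ => Finset.sum_nonneg fun _ _ =>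
    mul_nonneg (mul_nonneg (mul_nonneg (hq _ _) (hk1 _ _)) (hk3 _ _)) (hL _ _)

lemma destFun_prod [Fintype S] [Fintype W] [Fintype X1] [Fintype X3] [Fintype Y]
    [Fintype I] [DecidableEq I] [Fintype J] [DecidableEq J]
    {q : S → W → ℝ} (hq : ∀ s w, 0 ≤ q s w) {k1 : S → X1 → ℝ}
    {k3 : S → X3 → ℝ} (hk1 : ∀ s x, 0 ≤ k1 s x) (hk3 : ∀ s x, 0 ≤ k3 s x)
    {L : X1 × X3 → Y → ℝ} (hL : ∀ x y, 0 ≤ L x y) (ρ : ℝ) :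
    destFun (fun (s : I ⊕ J → S) (w : I ⊕ J → W) => ∏ m, q (s m) (w m))
        (blockKernel I J k1) (blockKernel I J k3)
        (fun (x : (I → X1) × (I → X3)) (y : I → Y) => ∏ i, L (x.1 i, x.2 i) (y i)) ρ =
      destFun q k1 k3 L ρ ^ Fintype.card I * sourceFun q ρ ^ Fintype.card J := by
  simp only [destFun, sourceFun, destOut_prod]
  have hc := sum_sum_pi_sum_prod (fun (_ : I) s w => ∑ x1, ∑ x3, ∑ y,
    q s w * k1 s x1 * k3 s x3 * L (x1, x3) y *
      (destOut q k1 k3 L w y / (q s w * L (x1, x3) y)) ^ ρ)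
    fun (_ : J) s w => q s w * ((∑ a, q a w) / q s w) ^ ρ
  rw [Finset.prod_const, Finset.prod_const, Finset.card_univ, Finset.card_univ] at hc
  rw [← hc]
  refine Finset.sum_congr rfl fun s _ => Finset.sum_congr rfl fun w _ => ?_
  rw [← sum_sum_sum_pi_prod fun i x1 x3 y => q (s (Sum.inl i)) (w (Sum.inl i)) *
    k1 (s (Sum.inl i)) x1 * k3 (s (Sum.inl i)) x3 * L (x1, x3) y *
      (destOut q k1 k3 L (w (Sum.inl i)) y /
        (q (s (Sum.inl i)) (w (Sum.inl i)) * L (x1, x3) y)) ^ ρ]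
  simp_rw [Finset.sum_mul]
  refine Finset.sum_congr rfl fun x1 _ => Finset.sum_congr rfl fun x3 _ =>
    Finset.sum_congr rfl fun y _ => ?_
  have hr : (∏ i, destOut q k1 k3 L (w (Sum.inl i)) (y i)) * (∏ j, ∑ s, q s (w (Sum.inr j))) /
      ((∏ m, q (s m) (w m)) * ∏ i, L (x1 i, x3 i) (y i)) =
      (∏ i, destOut q k1 k3 L (w (Sum.inl i)) (y i) /
        (q (s (Sum.inl i)) (w (Sum.inl i)) * L (x1 i, x3 i) (y i))) *
      ∏ j, (∑ s, q s (w (Sum.inr j))) / q (s (Sum.inr j)) (w (Sum.inr j)) := by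
    rw [Fintype.prod_sum_type, Finset.prod_div_distrib, Finset.prod_div_distrib,
      Finset.prod_mul_distrib, div_mul_div_comm, mul_right_comm (∏ i, q _ _)]
  have h1 : ∀ i, 0 ≤ destOut q k1 k3 L (w (Sum.inl i)) (y i) /
      (q (s (Sum.inl i)) (w (Sum.inl i)) * L (x1 i, x3 i) (y i)) := fun i =>
    div_nonneg (destOut_nonneg hq hk1 hk3 hL _ _) (mul_nonneg (hq _ _) (hL _ _))
  have h2 : ∀ j, 0 ≤ (∑ s, q s (w (Sum.inr j))) / q (s (Sum.inr j)) (w (Sum.inr j)) := fun j =>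
    div_nonneg (Finset.sum_nonneg fun _ _ => hq _ _) (hq _ _)
  rw [hr, Real.mul_rpow (Finset.prod_nonneg fun i _ => h1 i)
    (Finset.prod_nonneg fun j _ => h2 j), ← Real.finsetProd_rpow _ _ fun i _ => h1 i,
    ← Real.finsetProd_rpow _ _ fun j _ => h2 j]
  simp only [blockKernel, Fintype.prod_sum_type, Finset.prod_mul_distrib]
  ring

end Tensorization

section Exponents

lemma hasDerivAt_const_mul_rpow {c r : ℝ} (h : c ≠ 0 → 0 < r) :
    HasDerivAt (fun ρ : ℝ => c * r ^ ρ) (c * Real.log r) 0 := by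
  rcases eq_or_ne c 0 with rfl | hc
  · simpa using hasDerivAt_const (0 : ℝ) (0 : ℝ)
  · simpa using (((hasDerivAt_id (0 : ℝ)).const_rpow (h hc)).const_mul c)

lemma exists_lt_one_of_hasDerivAt_neg {f : ℝ → ℝ} {f' : ℝ} (hf : HasDerivAt f f' 0)
    (h0 : f 0 = 1) (hneg : f' < 0) : ∃ ρ, 0 ≤ ρ ∧ ρ ≤ 1 ∧ f ρ < 1 := by
  have hs := hf.hasDerivWithinAt (s := Set.Ioi 0)
  rw [hasDerivWithinAt_iff_tendsto_slope' (by simp)] at hs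
  have h1 := hs.eventually (eventually_lt_nhds hneg)
  have h2 : Set.Ioc (0 : ℝ) 1 ∈ nhdsWithin (0 : ℝ) (Set.Ioi 0) :=
    Ioc_mem_nhdsGT one_pos
  obtain ⟨ρ, hρ, hρ'⟩ := (h1.and h2).exists
  refine ⟨ρ, hρ'.1.le, hρ'.2, ?_⟩
  rw [slope_def_field, h0, sub_zero, div_neg_iff] at hρ
  rcases hρ with hρ | hρ
  · linarith [hρ'.1]
  · linarith

lemma exists_pow_mul_pow_lt_one {f g : ℝ → ℝ} {f' g' : ℝ} (hf : HasDerivAt f f' 0)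
    (hg : HasDerivAt g g' 0) (hf0 : f 0 = 1) (hg0 : g 0 = 1) (a b : ℕ)
    (h : a * f' + b * g' < 0) : ∃ ρ, 0 ≤ ρ ∧ ρ ≤ 1 ∧ f ρ ^ a * g ρ ^ b < 1 := by
  refine exists_lt_one_of_hasDerivAt_neg ((hf.fun_pow a).fun_mul (hg.fun_pow b)) ?_ ?_
  · simp [hf0, hg0]
  · simpa [hf0, hg0] using h

variable {S W X1 X3 Y : Type*} [Fintype S]

lemma hasDerivAt_sourceFun [Fintype W] {q : S → W → ℝ} (hq : ∀ s w, 0 ≤ q s w) :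
    HasDerivAt (sourceFun q) (∑ s, ∑ w, q s w * Real.log ((∑ s', q s' w) / q s w)) 0 := by
  refine HasDerivAt.fun_sum fun s _ => HasDerivAt.fun_sum fun w _ =>
    hasDerivAt_const_mul_rpow fun h => ?_
  have h' := (hq s w).lt_of_ne' h
  exact div_pos (h'.trans_le
    (Finset.single_le_sum (f := fun a => q a w) (fun a _ => hq a w) (Finset.mem_univ s))) h'

lemma sourceFun_nonneg [Fintype W] {q : S → W → ℝ} (hq : ∀ s w, 0 ≤ q s w) (ρ : ℝ) :
    0 ≤ sourceFun q ρ :=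
  Finset.sum_nonneg fun _ _ => Finset.sum_nonneg fun _ _ => mul_nonneg (hq _ _)
    (Real.rpow_nonneg (div_nonneg (Finset.sum_nonneg fun _ _ => hq _ _) (hq _ _)) _)

lemma sourceFun_zero [Fintype W] {q : S → W → ℝ} (h : ∑ s, ∑ w, q s w = 1) :
    sourceFun q 0 = 1 := by
  simp [sourceFun, h]

variable [Fintype X1] [Fintype X3] {k1 : S → X1 → ℝ} {k3 : S → X3 → ℝ} {L : X1 × X3 → Y → ℝ}

lemma le_destOut {q : S → W → ℝ} (hq : ∀ s w, 0 ≤ q s w) (hk1 : ∀ s x, 0 ≤ k1 s x)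
    (hk3 : ∀ s x, 0 ≤ k3 s x) (hL : ∀ x y, 0 ≤ L x y) (s : S) (w : W) (x1 : X1) (x3 : X3)
    (y : Y) : q s w * k1 s x1 * k3 s x3 * L (x1, x3) y ≤ destOut q k1 k3 L w y := by
  have h : ∀ s x1 x3, 0 ≤ q s w * k1 s x1 * k3 s x3 * L (x1, x3) y := fun s x1 x3 =>
    mul_nonneg (mul_nonneg (mul_nonneg (hq _ _) (hk1 _ _)) (hk3 _ _)) (hL _ _)
  exact (Finset.single_le_sum (f := fun x3 => q s w * k1 s x1 * k3 s x3 * L (x1, x3) y)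
      (fun x3 _ => h s x1 x3) (Finset.mem_univ x3)).trans <|
    (Finset.single_le_sum (f := fun x1 => ∑ x3, q s w * k1 s x1 * k3 s x3 * L (x1, x3) y)
      (fun x1 _ => Finset.sum_nonneg fun x3 _ => h s x1 x3) (Finset.mem_univ x1)).trans <|
    Finset.single_le_sum (f := fun s => ∑ x1, ∑ x3, q s w * k1 s x1 * k3 s x3 * L (x1, x3) y)
      (fun s _ => Finset.sum_nonneg fun x1 _ => Finset.sum_nonneg fun x3 _ => h s x1 x3)
      (Finset.mem_univ s)

variable [Fintype Y]

lemma hasDerivAt_relayFun (pS : S → ℝ) (hk1 : ∀ s x, 0 ≤ k1 s x) (hL : ∀ x y, 0 ≤ L x y) :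
    HasDerivAt (relayFun pS k1 k3 L) (∑ s, ∑ x3, ∑ x1, ∑ y,
      pS s * k3 s x3 * k1 s x1 * L (x1, x3) y *
        Real.log ((∑ x1', k1 s x1' * L (x1', x3) y) / L (x1, x3) y)) 0 := by
  refine HasDerivAt.fun_sum fun s _ => HasDerivAt.fun_sum fun x3 _ => HasDerivAt.fun_sum
    fun x1 _ => HasDerivAt.fun_sum fun y _ => hasDerivAt_const_mul_rpow fun h => ?_
  have hL' := (hL (x1, x3) y).lt_of_ne' (right_ne_zero_of_mul h)
  have hk' := (hk1 s x1).lt_of_ne' (right_ne_zero_of_mul (left_ne_zero_of_mul h))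
  exact div_pos ((mul_pos hk' hL').trans_le
    (Finset.single_le_sum (f := fun x1' => k1 s x1' * L (x1', x3) y)
      (fun a _ => mul_nonneg (hk1 s a) (hL _ _)) (Finset.mem_univ x1))) hL'

lemma relayFun_nonneg {pS : S → ℝ} (hpS : ∀ s, 0 ≤ pS s) (hk1 : ∀ s x, 0 ≤ k1 s x)
    (hk3 : ∀ s x, 0 ≤ k3 s x) (hL : ∀ x y, 0 ≤ L x y) (ρ : ℝ) :
    0 ≤ relayFun pS k1 k3 L ρ :=
  Finset.sum_nonneg fun _ _ => Finset.sum_nonneg fun _ _ => Finset.sum_nonneg fun _ _ =>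
    Finset.sum_nonneg fun _ _ => mul_nonneg
      (mul_nonneg (mul_nonneg (mul_nonneg (hpS _) (hk3 _ _)) (hk1 _ _)) (hL _ _))
      (Real.rpow_nonneg (div_nonneg (Finset.sum_nonneg fun _ _ =>
        mul_nonneg (hk1 _ _) (hL _ _)) (hL _ _)) _)

lemma relayFun_zero {pS : S → ℝ} (hpS : ∑ s, pS s = 1) (hk1 : ∀ s, IsPmf (k1 s))
    (hk3 : ∀ s, IsPmf (k3 s)) (hL : ∀ x, IsPmf (L x)) : relayFun pS k1 k3 L 0 = 1 := by
  simp [relayFun, ← Finset.mul_sum, (hL _).2, (hk1 _).2, (hk3 _).2, hpS]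

variable [Fintype W]

lemma hasDerivAt_destFun {q : S → W → ℝ} (hq : ∀ s w, 0 ≤ q s w) (hk1 : ∀ s x, 0 ≤ k1 s x)
    (hk3 : ∀ s x, 0 ≤ k3 s x) (hL : ∀ x y, 0 ≤ L x y) :
    HasDerivAt (destFun q k1 k3 L) (∑ s, ∑ w, ∑ x1, ∑ x3, ∑ y,
      q s w * k1 s x1 * k3 s x3 * L (x1, x3) y *
        Real.log (destOut q k1 k3 L w y / (q s w * L (x1, x3) y))) 0 := by
  refine HasDerivAt.fun_sum fun s _ => HasDerivAt.fun_sum fun w _ => HasDerivAt.fun_sum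
    fun x1 _ => HasDerivAt.fun_sum fun x3 _ => HasDerivAt.fun_sum fun y _ =>
      hasDerivAt_const_mul_rpow fun h => ?_
  have h' := (mul_nonneg (mul_nonneg (mul_nonneg (hq s w) (hk1 s x1)) (hk3 s x3))
    (hL (x1, x3) y)).lt_of_ne' h
  have hL' := (hL (x1, x3) y).lt_of_ne' (right_ne_zero_of_mul h)
  have hq' := (hq s w).lt_of_ne'
    (left_ne_zero_of_mul (left_ne_zero_of_mul (left_ne_zero_of_mul h)))
  exact div_pos (h'.trans_le (le_destOut hq hk1 hk3 hL s w x1 x3 y)) (mul_pos hq' hL')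

lemma destFun_nonneg {q : S → W → ℝ} (hq : ∀ s w, 0 ≤ q s w) (hk1 : ∀ s x, 0 ≤ k1 s x)
    (hk3 : ∀ s x, 0 ≤ k3 s x) (hL : ∀ x y, 0 ≤ L x y) (ρ : ℝ) :
    0 ≤ destFun q k1 k3 L ρ :=
  Finset.sum_nonneg fun _ _ => Finset.sum_nonneg fun _ _ => Finset.sum_nonneg fun _ _ =>
    Finset.sum_nonneg fun _ _ => Finset.sum_nonneg fun _ _ => mul_nonneg
      (mul_nonneg (mul_nonneg (mul_nonneg (hq _ _) (hk1 _ _)) (hk3 _ _)) (hL _ _))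
      (Real.rpow_nonneg (div_nonneg (destOut_nonneg hq hk1 hk3 hL _ _)
        (mul_nonneg (hq _ _) (hL _ _))) _)

lemma destFun_zero {q : S → W → ℝ} (hq : ∑ s, ∑ w, q s w = 1) (hk1 : ∀ s, IsPmf (k1 s))
    (hk3 : ∀ s, IsPmf (k3 s)) (hL : ∀ x, IsPmf (L x)) : destFun q k1 k3 L 0 = 1 := by
  simp [destFun, ← Finset.mul_sum, (hL _).2, (hk1 _).2, (hk3 _).2, hq]

end Exponents

section Entropy

variable {Ω α β γ : Type*} [Fintype Ω] [DecidableEq α] [DecidableEq β] [DecidableEq γ]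
  {μ : Ω → ℝ}

/-- The function `m` is the pmf of `X` under `μ`. -/
def IsLaw (μ : Ω → ℝ) (X : Ω → α) (m : α → ℝ) : Prop :=
  ∀ a, ∑ ω, μ ω * (if X ω = a then 1 else 0) = m a

lemma IsLaw.pos {X : Ω → α} {m : α → ℝ} (h : IsLaw μ X m) (hμ : ∀ ω, 0 ≤ μ ω) {ω : Ω}
    (hω : μ ω ≠ 0) : 0 < m (X ω) := by
  rw [← h]
  have h1 := Finset.single_le_sum
    (f := fun ω' => μ ω' * (if X ω' = X ω then (1 : ℝ) else 0))
    (fun ω' _ => mul_nonneg (hμ ω') (by split_ifs <;> simp)) (Finset.mem_univ ω)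
  simp only [if_true, mul_one] at h1
  exact ((hμ ω).lt_of_ne' hω).trans_le h1

variable [Fintype α] [Fintype β] [Fintype γ]

lemma IsLaw.entropyOf_eq {X : Ω → α} {m : α → ℝ} (h : IsLaw μ X m) :
    entropyOf μ X = -∑ ω, μ ω * Real.log (m (X ω)) := by
  have hm : ∀ a, (∑ ω, if X ω = a then μ ω else 0) = m a := fun a => by
    rw [← h a]; simp
  simp only [entropyOf, hm, Real.negMulLog, neg_mul, Finset.sum_neg_distrib]
  congr 1
  have h' : ∀ a, m a * Real.log (m a) =
      ∑ ω, μ ω * (if X ω = a then 1 else 0) * Real.log (m a) := fun a => by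
    rw [← Finset.sum_mul, h a]
  simp only [h']
  rw [Finset.sum_comm]
  refine Finset.sum_congr rfl fun ω _ => ?_
  simp

lemma condEntropyOf_eq (hμ : ∀ ω, 0 ≤ μ ω) {X : Ω → α} {Y : Ω → β} {m : α × β → ℝ}
    {mY : β → ℝ} (h : IsLaw μ (fun ω => (X ω, Y ω)) m) (hY : IsLaw μ Y mY) :
    condEntropyOf μ X Y = ∑ ω, μ ω * Real.log (mY (Y ω) / m (X ω, Y ω)) := by
  rw [condEntropyOf, h.entropyOf_eq, hY.entropyOf_eq, neg_sub_neg, ← Finset.sum_sub_distrib]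
  refine Finset.sum_congr rfl fun ω _ => ?_
  by_cases hω : μ ω = 0
  · simp [hω]
  · rw [Real.log_div (hY.pos hμ hω).ne' (h.pos hμ hω).ne', mul_sub]

lemma condMutualInfoOf_eq (hμ : ∀ ω, 0 ≤ μ ω) {X : Ω → α} {Y : Ω → β} {Z : Ω → γ}
    {mXZ : α × γ → ℝ} {mYZ : β × γ → ℝ} {m : α × β × γ → ℝ} {mZ : γ → ℝ}
    (hXZ : IsLaw μ (fun ω => (X ω, Z ω)) mXZ) (hYZ : IsLaw μ (fun ω => (Y ω, Z ω)) mYZ)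
    (h : IsLaw μ (fun ω => (X ω, Y ω, Z ω)) m) (hZ : IsLaw μ Z mZ) :
    condMutualInfoOf μ X Y Z = ∑ ω, μ ω * Real.log
      (m (X ω, Y ω, Z ω) * mZ (Z ω) / (mXZ (X ω, Z ω) * mYZ (Y ω, Z ω))) := by
  rw [condMutualInfoOf, h.entropyOf_eq, hXZ.entropyOf_eq, hYZ.entropyOf_eq, hZ.entropyOf_eq]
  have : ∀ a b c d : ℝ, -a + -b - -c - -d = c + d - (a + b) := fun _ _ _ _ => by ring
  rw [this, ← Finset.sum_add_distrib, ← Finset.sum_add_distrib, ← Finset.sum_sub_distrib]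
  refine Finset.sum_congr rfl fun ω _ => ?_
  by_cases hω : μ ω = 0
  · simp [hω]
  · have h1 := (h.pos hμ hω).ne'
    have h2 := (hXZ.pos hμ hω).ne'
    have h3 := (hYZ.pos hμ hω).ne'
    have h4 := (hZ.pos hμ hω).ne'
    rw [Real.log_div (mul_ne_zero h1 h4) (mul_ne_zero h2 h3), Real.log_mul h1 h4,
      Real.log_mul h2 h3]
    ring

end Entropy

section SingleLetter

variable {S W W3 X1 X3 Y Y3 : Type*}
  [Fintype S] [Fintype W] [Fintype W3] [Fintype X1] [Fintype X3] [Fintype Y] [Fintype Y3]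
  {pSrc : S × W × W3 → ℝ} {Q : X1 × X3 → Y × Y3 → ℝ} {k1 : S → X1 → ℝ} {k3 : S → X3 → ℝ}

/-- Expectation of a function of `(S, X1, X3, Y3)`. -/
lemma sum_crbcCpmJoint_relay (pSrc : S × W × W3 → ℝ) (Q : X1 × X3 → Y × Y3 → ℝ)
    (k1 : S → X1 → ℝ) (k3 : S → X3 → ℝ) (f : S → X1 → X3 → Y3 → ℝ) :
    ∑ ω, crbcCpmJoint pSrc Q k1 k3 ω * f ω.1 ω.2.2.2.1 ω.2.2.2.2.1 ω.2.2.2.2.2.1 =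
      ∑ s, ∑ x3, ∑ x1, ∑ y3, margS pSrc s * k3 s x3 * k1 s x1 * chanY3 Q (x1, x3) y3 *
        f s x1 x3 y3 := by
  simp only [Fintype.sum_prod_type, crbcCpmJoint]
  refine Finset.sum_congr rfl fun s _ => ?_
  have h1 : ∀ w3 w, ∑ x1, ∑ x3, ∑ y3, ∑ y,
      pSrc (s, w, w3) * k1 s x1 * k3 s x3 * Q (x1, x3) (y, y3) * f s x1 x3 y3 =
      pSrc (s, w, w3) * ∑ x1, ∑ x3, ∑ y3, k3 s x3 * k1 s x1 * chanY3 Q (x1, x3) y3 *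
        f s x1 x3 y3 := by
    intro w3 w
    simp only [chanY3, Finset.mul_sum, Finset.sum_mul]
    refine Finset.sum_congr rfl fun x1 _ => Finset.sum_congr rfl fun x3 _ =>
      Finset.sum_congr rfl fun y3 _ => Finset.sum_congr rfl fun y _ => ?_
    ring
  simp only [h1]
  simp only [← Finset.sum_mul]
  rw [Finset.sum_comm (γ := W3), ← margS, Finset.sum_comm (γ := X1)]
  simp only [Finset.mul_sum]
  refine Finset.sum_congr rfl fun x3 _ => Finset.sum_congr rfl fun x1 _ =>
    Finset.sum_congr rfl fun y3 _ => ?_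
  ring

/-- Expectation of a function of `(S, W, X1, X3, Y)`. -/
lemma sum_crbcCpmJoint_dest (pSrc : S × W × W3 → ℝ) (Q : X1 × X3 → Y × Y3 → ℝ)
    (k1 : S → X1 → ℝ) (k3 : S → X3 → ℝ) (f : S → W → X1 → X3 → Y → ℝ) :
    ∑ ω, crbcCpmJoint pSrc Q k1 k3 ω *
        f ω.1 ω.2.2.1 ω.2.2.2.1 ω.2.2.2.2.1 ω.2.2.2.2.2.2 =
      ∑ s, ∑ w, ∑ x1, ∑ x3, ∑ y, margSW pSrc s w * k1 s x1 * k3 s x3 * chanY Q (x1, x3) y *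
        f s w x1 x3 y := by
  simp only [Fintype.sum_prod_type, crbcCpmJoint]
  refine Finset.sum_congr rfl fun s _ => ?_
  rw [Finset.sum_comm]
  refine Finset.sum_congr rfl fun w _ => ?_
  have h1 : ∀ w3, ∑ x1, ∑ x3, ∑ y3, ∑ y,
      pSrc (s, w, w3) * k1 s x1 * k3 s x3 * Q (x1, x3) (y, y3) * f s w x1 x3 y =
      pSrc (s, w, w3) * ∑ x1, ∑ x3, ∑ y, k1 s x1 * k3 s x3 * chanY Q (x1, x3) y *
        f s w x1 x3 y := by
    intro w3
    simp only [chanY, Finset.mul_sum, Finset.sum_mul]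
    refine Finset.sum_congr rfl fun x1 _ => Finset.sum_congr rfl fun x3 _ => ?_
    rw [Finset.sum_comm]
    refine Finset.sum_congr rfl fun y3 _ => Finset.sum_congr rfl fun y _ => ?_
    ring
  simp only [h1]
  simp only [← Finset.sum_mul]
  rw [← margSW]
  simp only [Finset.mul_sum]
  refine Finset.sum_congr rfl fun x1 _ => Finset.sum_congr rfl fun x3 _ =>
    Finset.sum_congr rfl fun y _ => ?_
  ring

/-- Expectation of a function of `(S, W3)`. -/
lemma sum_crbcCpmJoint_source (pSrc : S × W × W3 → ℝ) (hQ : ∀ x, IsPmf (Q x))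
    (hk1 : ∀ s, IsPmf (k1 s)) (hk3 : ∀ s, IsPmf (k3 s)) (f : S → W3 → ℝ) :
    ∑ ω, crbcCpmJoint pSrc Q k1 k3 ω * f ω.1 ω.2.1 = ∑ s, ∑ w3, margSW3 pSrc s w3 * f s w3 := by
  have hQ' : ∀ x, ∑ y3, ∑ y, Q x (y, y3) = 1 := fun x => by
    rw [Finset.sum_comm, ← Fintype.sum_prod_type', (hQ x).2]
  simp only [Fintype.sum_prod_type, crbcCpmJoint, ← Finset.sum_mul, ← Finset.mul_sum, hQ',
    (hk1 _).2, (hk3 _).2, mul_one, margSW3]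

end SingleLetter

section SingleLetterLaws

variable {S W W3 X1 X3 Y Y3 : Type*} [Fintype Y] [Fintype Y3]
  {pSrc : S × W × W3 → ℝ} {Q : X1 × X3 → Y × Y3 → ℝ} {k1 : S → X1 → ℝ} {k3 : S → X3 → ℝ}

lemma isPmf_chanY (hQ : ∀ x, IsPmf (Q x)) (x : X1 × X3) : IsPmf (chanY Q x) :=
  ⟨chanY_nonneg hQ x, by simp only [chanY]; rw [← Fintype.sum_prod_type', (hQ x).2]⟩

lemma isPmf_chanY3 (hQ : ∀ x, IsPmf (Q x)) (x : X1 × X3) : IsPmf (chanY3 Q x) :=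
  ⟨chanY3_nonneg hQ x, by
    simp only [chanY3]; rw [Finset.sum_comm, ← Fintype.sum_prod_type', (hQ x).2]⟩

variable [Fintype S] [Fintype W] [Fintype W3] [Fintype X1] [Fintype X3]

lemma crbcCpmJoint_nonneg (hSrc : IsPmf pSrc) (hQ : ∀ x, IsPmf (Q x))
    (hk1 : ∀ s, IsPmf (k1 s)) (hk3 : ∀ s, IsPmf (k3 s)) (ω : S × W3 × W × X1 × X3 × Y3 × Y) :
    0 ≤ crbcCpmJoint pSrc Q k1 k3 ω :=
  mul_nonneg (mul_nonneg (mul_nonneg (hSrc.1 _) ((hk1 _).1 _)) ((hk3 _).1 _)) ((hQ _).1 _)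

lemma isLaw_source_relay [DecidableEq S] [DecidableEq W3]
    (hQ : ∀ x, IsPmf (Q x)) (hk1 : ∀ s, IsPmf (k1 s))
    (hk3 : ∀ s, IsPmf (k3 s)) :
    IsLaw (crbcCpmJoint pSrc Q k1 k3) (fun ω => (ω.1, ω.2.1))
      fun a => margSW3 pSrc a.1 a.2 := by
  rintro ⟨s, w3⟩
  refine (sum_crbcCpmJoint_source pSrc hQ hk1 hk3
    fun s' w3' => if (s', w3') = (s, w3) then 1 else 0).trans ?_
  simp [ite_and, Finset.sum_ite_irrel]

lemma isLaw_side_relay [DecidableEq W3]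
    (hQ : ∀ x, IsPmf (Q x)) (hk1 : ∀ s, IsPmf (k1 s))
    (hk3 : ∀ s, IsPmf (k3 s)) :
    IsLaw (crbcCpmJoint pSrc Q k1 k3) (fun ω => ω.2.1) fun w3 => ∑ s, margSW3 pSrc s w3 := by
  intro w3
  refine (sum_crbcCpmJoint_source pSrc hQ hk1 hk3
    fun s' w3' => if w3' = w3 then 1 else 0).trans ?_
  simp

lemma isLaw_relay_input [DecidableEq S] [DecidableEq X1] [DecidableEq X3]
    (hQ : ∀ x, IsPmf (Q x)) :
    IsLaw (crbcCpmJoint pSrc Q k1 k3) (fun ω => (ω.2.2.2.1, (ω.2.2.2.2.1, ω.1)))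
      fun a => margS pSrc a.2.2 * k3 a.2.2 a.2.1 * k1 a.2.2 a.1 := by
  rintro ⟨x1, x3, s⟩
  refine (sum_crbcCpmJoint_relay pSrc Q k1 k3
    fun s' x1' x3' y3' => if (x1', x3', s') = (x1, x3, s) then 1 else 0).trans ?_
  simp [ite_and, Finset.sum_ite_irrel, ← Finset.mul_sum, (isPmf_chanY3 hQ _).2]

lemma isLaw_relay_output [DecidableEq S] [DecidableEq X3] [DecidableEq Y3] :
    IsLaw (crbcCpmJoint pSrc Q k1 k3) (fun ω => (ω.2.2.2.2.2.1, (ω.2.2.2.2.1, ω.1)))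
      fun a => margS pSrc a.2.2 * k3 a.2.2 a.2.1 *
        ∑ x1, k1 a.2.2 x1 * chanY3 Q (x1, a.2.1) a.1 := by
  rintro ⟨y3, x3, s⟩
  refine (sum_crbcCpmJoint_relay pSrc Q k1 k3
    fun s' x1' x3' y3' => if (y3', x3', s') = (y3, x3, s) then 1 else 0).trans ?_
  simp [ite_and, Finset.sum_ite_irrel, Finset.mul_sum, mul_assoc]

lemma isLaw_relay_joint [DecidableEq S] [DecidableEq X1] [DecidableEq X3] [DecidableEq Y3] :
    IsLaw (crbcCpmJoint pSrc Q k1 k3)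
      (fun ω => (ω.2.2.2.1, ω.2.2.2.2.2.1, (ω.2.2.2.2.1, ω.1)))
      fun a => margS pSrc a.2.2.2 * k3 a.2.2.2 a.2.2.1 * k1 a.2.2.2 a.1 *
        chanY3 Q (a.1, a.2.2.1) a.2.1 := by
  rintro ⟨x1, y3, x3, s⟩
  refine (sum_crbcCpmJoint_relay pSrc Q k1 k3
    fun s' x1' x3' y3' => if (x1', y3', x3', s') = (x1, y3, x3, s) then 1 else 0).trans ?_
  simp [ite_and, Finset.sum_ite_irrel]

lemma isLaw_relay_cond [DecidableEq S] [DecidableEq X3]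
    (hQ : ∀ x, IsPmf (Q x)) (hk1 : ∀ s, IsPmf (k1 s)) :
    IsLaw (crbcCpmJoint pSrc Q k1 k3) (fun ω => (ω.2.2.2.2.1, ω.1))
      fun a => margS pSrc a.2 * k3 a.2 a.1 := by
  rintro ⟨x3, s⟩
  refine (sum_crbcCpmJoint_relay pSrc Q k1 k3
    fun s' x1' x3' y3' => if (x3', s') = (x3, s) then 1 else 0).trans ?_
  simp [ite_and, Finset.sum_ite_irrel, ← Finset.mul_sum, (isPmf_chanY3 hQ _).2, (hk1 _).2]

lemma isLaw_source_dest [DecidableEq S] [DecidableEq W]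
    (hQ : ∀ x, IsPmf (Q x)) (hk1 : ∀ s, IsPmf (k1 s))
    (hk3 : ∀ s, IsPmf (k3 s)) :
    IsLaw (crbcCpmJoint pSrc Q k1 k3) (fun ω => (ω.1, ω.2.2.1))
      fun a => margSW pSrc a.1 a.2 := by
  rintro ⟨s, w⟩
  refine (sum_crbcCpmJoint_dest pSrc Q k1 k3
    fun s' w' x1' x3' y' => if (s', w') = (s, w) then 1 else 0).trans ?_
  simp [ite_and, Finset.sum_ite_irrel, ← Finset.mul_sum, (isPmf_chanY hQ _).2, (hk1 _).2,
    (hk3 _).2]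

lemma isLaw_side_dest [DecidableEq W]
    (hQ : ∀ x, IsPmf (Q x)) (hk1 : ∀ s, IsPmf (k1 s))
    (hk3 : ∀ s, IsPmf (k3 s)) :
    IsLaw (crbcCpmJoint pSrc Q k1 k3) (fun ω => ω.2.2.1) fun w => ∑ s, margSW pSrc s w := by
  intro w
  refine (sum_crbcCpmJoint_dest pSrc Q k1 k3
    fun s' w' x1' x3' y' => if w' = w then 1 else 0).trans ?_
  simp [Finset.sum_ite_irrel, ← Finset.mul_sum, (isPmf_chanY hQ _).2, (hk1 _).2, (hk3 _).2]

lemma isLaw_dest_input [DecidableEq W] [DecidableEq X1] [DecidableEq X3]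
    (hQ : ∀ x, IsPmf (Q x)) :
    IsLaw (crbcCpmJoint pSrc Q k1 k3) (fun ω => ((ω.2.2.2.1, ω.2.2.2.2.1), ω.2.2.1))
      fun a => ∑ s, margSW pSrc s a.2 * k1 s a.1.1 * k3 s a.1.2 := by
  rintro ⟨⟨x1, x3⟩, w⟩
  refine (sum_crbcCpmJoint_dest pSrc Q k1 k3
    fun s' w' x1' x3' y' => if ((x1', x3'), w') = ((x1, x3), w) then 1 else 0).trans ?_
  simp [ite_and, Finset.sum_ite_irrel, ← Finset.mul_sum, (isPmf_chanY hQ _).2]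

lemma isLaw_dest_output [DecidableEq W] [DecidableEq Y] :
    IsLaw (crbcCpmJoint pSrc Q k1 k3) (fun ω => (ω.2.2.2.2.2.2, ω.2.2.1))
      fun a => destOut (margSW pSrc) k1 k3 (chanY Q) a.2 a.1 := by
  rintro ⟨y, w⟩
  refine (sum_crbcCpmJoint_dest pSrc Q k1 k3
    fun s' w' x1' x3' y' => if (y', w') = (y, w) then 1 else 0).trans ?_
  simp [ite_and, Finset.sum_ite_irrel, destOut]

lemma isLaw_dest_joint [DecidableEq W] [DecidableEq X1] [DecidableEq X3] [DecidableEq Y] :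
    IsLaw (crbcCpmJoint pSrc Q k1 k3)
      (fun ω => ((ω.2.2.2.1, ω.2.2.2.2.1), ω.2.2.2.2.2.2, ω.2.2.1))
      fun a => (∑ s, margSW pSrc s a.2.2 * k1 s a.1.1 * k3 s a.1.2) *
        chanY Q a.1 a.2.1 := by
  rintro ⟨⟨x1, x3⟩, y, w⟩
  refine (sum_crbcCpmJoint_dest pSrc Q k1 k3
    fun s' w' x1' x3' y' => if ((x1', x3'), y', w') = ((x1, x3), y, w) then 1 else 0).trans ?_
  simp [ite_and, Finset.sum_ite_irrel, Finset.sum_mul]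

lemma condEntropyOf_source_relay [DecidableEq S] [DecidableEq W3]
    (hSrc : IsPmf pSrc) (hQ : ∀ x, IsPmf (Q x))
    (hk1 : ∀ s, IsPmf (k1 s)) (hk3 : ∀ s, IsPmf (k3 s)) :
    condEntropyOf (crbcCpmJoint pSrc Q k1 k3) (fun ω => ω.1) (fun ω => ω.2.1) =
      ∑ s, ∑ w3, margSW3 pSrc s w3 * Real.log ((∑ a, margSW3 pSrc a w3) / margSW3 pSrc s w3) :=
  (condEntropyOf_eq (crbcCpmJoint_nonneg hSrc hQ hk1 hk3) (isLaw_source_relay hQ hk1 hk3)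
    (isLaw_side_relay hQ hk1 hk3)).trans
    (sum_crbcCpmJoint_source pSrc hQ hk1 hk3 fun s w3 =>
      Real.log ((∑ a, margSW3 pSrc a w3) / margSW3 pSrc s w3))

lemma neg_condMutualInfoOf_relay [DecidableEq S] [DecidableEq X1] [DecidableEq X3] [DecidableEq Y3]
    (hSrc : IsPmf pSrc) (hQ : ∀ x, IsPmf (Q x))
    (hk1 : ∀ s, IsPmf (k1 s)) (hk3 : ∀ s, IsPmf (k3 s)) :
    -condMutualInfoOf (crbcCpmJoint pSrc Q k1 k3) (fun ω => ω.2.2.2.1)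
        (fun ω => ω.2.2.2.2.2.1) (fun ω => (ω.2.2.2.2.1, ω.1)) =
      ∑ s, ∑ x3, ∑ x1, ∑ y, margS pSrc s * k3 s x3 * k1 s x1 * chanY3 Q (x1, x3) y *
        Real.log ((∑ x1', k1 s x1' * chanY3 Q (x1', x3) y) / chanY3 Q (x1, x3) y) := by
  have hμ := crbcCpmJoint_nonneg hSrc hQ hk1 hk3
  rw [condMutualInfoOf_eq hμ (isLaw_relay_input hQ) isLaw_relay_output isLaw_relay_joint
    (isLaw_relay_cond hQ hk1), ← Finset.sum_neg_distrib,
    ← sum_crbcCpmJoint_relay pSrc Q k1 k3 fun s x1 x3 y =>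
      Real.log ((∑ x1', k1 s x1' * chanY3 Q (x1', x3) y) / chanY3 Q (x1, x3) y)]
  refine Finset.sum_congr rfl fun ω _ => ?_
  by_cases hω : crbcCpmJoint pSrc Q k1 k3 ω = 0
  · simp [hω]
  · have h1 := (isLaw_relay_joint.pos hμ hω).ne'
    rw [← mul_neg, ← Real.log_inv, inv_div]
    congr 2
    have hk := left_ne_zero_of_mul h1
    have hL := right_ne_zero_of_mul h1
    have hk' := left_ne_zero_of_mul hk
    have hk1' := right_ne_zero_of_mul hk
    have hS := left_ne_zero_of_mul hk'
    have hk3' := right_ne_zero_of_mul hk'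
    dsimp only at *
    field_simp

lemma condEntropyOf_sub_condMutualInfoOf_dest [DecidableEq S] [DecidableEq W] [DecidableEq X1] [DecidableEq X3] [DecidableEq Y]
    (hSrc : IsPmf pSrc) (hQ : ∀ x, IsPmf (Q x))
    (hk1 : ∀ s, IsPmf (k1 s)) (hk3 : ∀ s, IsPmf (k3 s)) :
    condEntropyOf (crbcCpmJoint pSrc Q k1 k3) (fun ω => ω.1) (fun ω => ω.2.2.1) -
      condMutualInfoOf (crbcCpmJoint pSrc Q k1 k3) (fun ω => (ω.2.2.2.1, ω.2.2.2.2.1))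
        (fun ω => ω.2.2.2.2.2.2) (fun ω => ω.2.2.1) =
      ∑ s, ∑ w, ∑ x1, ∑ x3, ∑ y,
        margSW pSrc s w * k1 s x1 * k3 s x3 * chanY Q (x1, x3) y *
          Real.log (destOut (margSW pSrc) k1 k3 (chanY Q) w y /
            (margSW pSrc s w * chanY Q (x1, x3) y)) := by
  have hμ := crbcCpmJoint_nonneg hSrc hQ hk1 hk3
  rw [condEntropyOf_eq hμ (isLaw_source_dest hQ hk1 hk3) (isLaw_side_dest hQ hk1 hk3),
    condMutualInfoOf_eq hμ (isLaw_dest_input hQ) isLaw_dest_output isLaw_dest_joint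
      (isLaw_side_dest hQ hk1 hk3), ← Finset.sum_sub_distrib,
    ← sum_crbcCpmJoint_dest pSrc Q k1 k3 fun s w x1 x3 y =>
      Real.log (destOut (margSW pSrc) k1 k3 (chanY Q) w y /
            (margSW pSrc s w * chanY Q (x1, x3) y))]
  refine Finset.sum_congr rfl fun ω _ => ?_
  by_cases hω : crbcCpmJoint pSrc Q k1 k3 ω = 0
  · simp [hω]
  · have h1 := (isLaw_dest_joint.pos hμ hω).ne'
    have hq := ((isLaw_source_dest hQ hk1 hk3).pos hμ hω).ne'
    have hw := ((isLaw_side_dest hQ hk1 hk3).pos hμ hω).ne'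
    have hD := (isLaw_dest_output.pos hμ hω).ne'
    have hA := left_ne_zero_of_mul h1
    have hL := right_ne_zero_of_mul h1
    dsimp only at *
    rw [← mul_sub, ← Real.log_div (div_ne_zero hw hq)
      (div_ne_zero (mul_ne_zero h1 hw) (mul_ne_zero hA hD))]
    congr 2
    field_simp

end SingleLetterLaws

section Achievability

lemma finProdFinEquiv_symm_fst_lt {a b : ℕ} (j k : Fin (a * b))
    (h : (finProdFinEquiv.symm j).1 < (finProdFinEquiv.symm k).1) : j < k := by
  by_contra! hjk
  exact absurd h (not_lt.mpr (Nat.div_le_div_right (Fin.le_def.mp hjk)))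

lemma IsPmf.nonempty {α : Type*} [Fintype α] {p : α → ℝ} (hp : IsPmf p) : Nonempty α := by
  by_contra h
  rw [not_nonempty_iff] at h
  simpa using hp.2

variable {S1 W W3 X1 X3 Y Y3 : Type*}
  [Fintype S1] [Fintype W] [Fintype W3] [Fintype X1] [Fintype X3] [Fintype Y] [Fintype Y3]
  [DecidableEq S1] {pSrc : S1 × W × W3 → ℝ} {Q : X1 × X3 → Y × Y3 → ℝ}
  {k1 : S1 → X1 → ℝ} {k3 : S1 → X3 → ℝ}

/-- Error bound of the block Markov code with `B` source blocks of length `(B + 1) * t`. -/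
lemma exists_code_iid (hSrc : IsPmf pSrc) (hQ : ∀ x, IsPmf (Q x)) (hk1 : ∀ s, IsPmf (k1 s))
    (hk3 : ∀ s, IsPmf (k3 s)) (B t : ℕ) {ρ ρ' : ℝ} (hρ0 : 0 ≤ ρ) (hρ1 : ρ ≤ 1)
    (hρ0' : 0 ≤ ρ') (hρ1' : ρ' ≤ 1) :
    ∃ (f1 : (Fin ((B + 1) * (B * t)) → S1) → Fin ((B + 1) * (B * t)) → X1)
      (f3 : Fin ((B + 1) * (B * t)) → (Fin ((B + 1) * (B * t)) → Y3) →
        (Fin ((B + 1) * (B * t)) → W3) → X3)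
      (g3 : (Fin ((B + 1) * (B * t)) → Y3) → (Fin ((B + 1) * (B * t)) → W3) →
        Fin ((B + 1) * (B * t)) → S1)
      (g : (Fin ((B + 1) * (B * t)) → Y) → (Fin ((B + 1) * (B * t)) → W) →
        Fin ((B + 1) * (B * t)) → S1),
      CausalRelay f3 ∧ crbcErrProb pSrc Q ((B + 1) * (B * t)) f1 f3 g3 g ≤
        B * ((sourceFun (margSW3 pSrc) ρ ^ (B + 1) *
            relayFun (margS pSrc) k1 k3 (chanY3 Q) ρ ^ B) ^ t +
          (destFun (margSW pSrc) k1 k3 (chanY Q) ρ' ^ B *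
            sourceFun (margSW pSrc) ρ' ^ 1) ^ t) := by
  classical
  have hS : Nonempty S1 := hSrc.nonempty.map Prod.fst
  obtain ⟨s₀⟩ := id hS
  obtain ⟨x₁⟩ := (hk1 s₀).nonempty
  obtain ⟨x₃⟩ := (hk3 s₀).nonempty
  have hY : Nonempty Y := (hQ (x₁, x₃)).nonempty.map Prod.fst
  have hY3 : Nonempty Y3 := (hQ (x₁, x₃)).nonempty.map Prod.snd
  have hcard : Fintype.card (Fin ((B + 1) * (B * t))) =
      Fintype.card (Fin B × (Fin (B * t) ⊕ Fin t)) := by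
    simp only [Fintype.card_fin, Fintype.card_prod, Fintype.card_sum]
    ring
  obtain ⟨f1, f3, g3, g, hf, hP⟩ := exists_code hSrc hQ finProdFinEquiv.symm
    finProdFinEquiv_symm_fst_lt (Fintype.equivOfCardEq hcard)
    (k1 := blockKernel (Fin (B * t)) (Fin t) k1) (k3 := blockKernel (Fin (B * t)) (Fin t) k3)
    (isPmf_blockKernel hk1) (isPmf_blockKernel hk3) hρ0 hρ1 hρ0' hρ1'
  refine ⟨f1, f3, g3, g, hf, hP.trans_eq ?_⟩
  have hpS : ∑ s, margS pSrc s = 1 := by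
    simpa [hSrc.2] using (sum_mul_eq_margS pSrc fun _ => 1).symm
  have e1 : margSW3 (blockPmf (Fin (B * t) ⊕ Fin t) pSrc) =
      fun s w3 => ∏ m, margSW3 pSrc (s m) (w3 m) := funext₂ (margSW3_blockPmf pSrc)
  have e2 : margSW (blockPmf (Fin (B * t) ⊕ Fin t) pSrc) =
      fun s w => ∏ m, margSW pSrc (s m) (w m) := funext₂ (margSW_blockPmf pSrc)
  have e3 : margS (blockPmf (Fin (B * t) ⊕ Fin t) pSrc) =
      fun s => ∏ m, margS pSrc (s m) := funext (margS_blockPmf pSrc)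
  have e4 : chanY (blockChan (Fin (B * t)) Q) =
      fun x y => ∏ i, chanY Q (x.1 i, x.2 i) (y i) := funext₂ (chanY_blockChan Q)
  have e5 : chanY3 (blockChan (Fin (B * t)) Q) =
      fun x y => ∏ i, chanY3 Q (x.1 i, x.2 i) (y i) := funext₂ (chanY3_blockChan Q)
  rw [e1, e2, e3, e4, e5, sourceFun_prod (margSW3_nonneg hSrc),
    relayFun_prod hpS (fun s => (hk1 s).1) (chanY3_nonneg hQ),
    destFun_prod (margSW_nonneg hSrc) (fun s => (hk1 s).1) (fun s => (hk3 s).1)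
      (chanY_nonneg hQ)]
  simp only [Fintype.card_fin, Fintype.card_sum]
  ring

lemma exists_nat_mul_add_neg {a b c d : ℝ} (ha : a < 0) (hb : b < 0) :
    ∃ n : ℕ, 0 < n ∧ n * a + c < 0 ∧ n * b + d < 0 := by
  have h : ∀ {a c : ℝ}, a < 0 → ∀ᶠ n : ℕ in Filter.atTop, n * a + c < 0 := fun {a c} ha =>
    (Filter.tendsto_atBot_add_const_right _ c
      (tendsto_natCast_atTop_atTop.atTop_mul_const_of_neg ha)).eventually_lt_atBot 0
  exact ((Filter.eventually_gt_atTop 0).and ((h ha).and (h hb))).exists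

/-- If the exponents at the relay and at the destination have negative slopes at the origin, then
the source can be reliably transmitted. -/
lemma crbcReliablyTransmitted_of_slopes (hSrc : IsPmf pSrc) (hQ : ∀ x, IsPmf (Q x))
    (hk1 : ∀ s, IsPmf (k1 s)) (hk3 : ∀ s, IsPmf (k3 s)) {dS dR dT dD : ℝ}
    (hS : HasDerivAt (sourceFun (margSW3 pSrc)) dS 0)
    (hR : HasDerivAt (relayFun (margS pSrc) k1 k3 (chanY3 Q)) dR 0)
    (hT : HasDerivAt (sourceFun (margSW pSrc)) dT 0)
    (hD : HasDerivAt (destFun (margSW pSrc) k1 k3 (chanY Q)) dD 0)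
    (hneg : dS + dR < 0) (hneg' : dD < 0) : CrbcReliablyTransmitted pSrc Q := by
  intro ε hε
  have hpS : ∑ s, margS pSrc s = 1 := by
    simpa [hSrc.2] using (sum_mul_eq_margS pSrc fun _ => 1).symm
  have hpSW : ∑ s, ∑ w, margSW pSrc s w = 1 := by
    simpa [hSrc.2] using (sum_mul_eq_margSW pSrc fun _ _ => 1).symm
  have hpSW3 : ∑ s, ∑ w, margSW3 pSrc s w = 1 := by
    simpa [hSrc.2] using (sum_mul_eq_margSW3 pSrc fun _ _ => 1).symm
  have hk1' : ∀ s x, 0 ≤ k1 s x := fun s => (hk1 s).1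
  have hk3' : ∀ s x, 0 ≤ k3 s x := fun s => (hk3 s).1
  obtain ⟨B, hB, hB1, hB2⟩ := exists_nat_mul_add_neg (c := dS) (d := dT) hneg hneg'
  obtain ⟨ρ, hρ0, hρ1, hρ⟩ := exists_pow_mul_pow_lt_one hS hR (sourceFun_zero hpSW3)
    (relayFun_zero hpS hk1 hk3 (isPmf_chanY3 hQ)) (B + 1) B (by push_cast; linarith)
  obtain ⟨ρ', hρ0', hρ1', hρ'⟩ := exists_pow_mul_pow_lt_one hD hT
    (destFun_zero hpSW hk1 hk3 (isPmf_chanY hQ)) (sourceFun_zero hpSW) B 1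
    (by push_cast; linarith)
  have hlim := ((tendsto_pow_atTop_nhds_zero_of_lt_one
      (mul_nonneg (pow_nonneg (sourceFun_nonneg (margSW3_nonneg hSrc) ρ) _)
        (pow_nonneg (relayFun_nonneg (margS_nonneg hSrc) hk1' hk3' (chanY3_nonneg hQ) ρ) _))
      hρ).add (tendsto_pow_atTop_nhds_zero_of_lt_one
      (mul_nonneg
        (pow_nonneg (destFun_nonneg (margSW_nonneg hSrc) hk1' hk3' (chanY_nonneg hQ) ρ') _)
        (pow_nonneg (sourceFun_nonneg (margSW_nonneg hSrc) ρ') _)) hρ')).const_mul (B : ℝ)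
  rw [add_zero, mul_zero] at hlim
  obtain ⟨t, htε, ht⟩ :=
    ((hlim.eventually (eventually_le_nhds hε)).and (Filter.eventually_gt_atTop 0)).exists
  obtain ⟨f1, f3, g3, g, hf, hP⟩ :=
    exists_code_iid hSrc hQ hk1 hk3 B t hρ0 hρ1 hρ0' hρ1'
  exact ⟨(B + 1) * (B * t), by positivity, f1, f3, g3, g, hf, hP.trans htε⟩

end Achievability

/-- **Specialization of Theorem 2 to the single-source case** (Remark on the CRBC):
if there are conditional input pmfs `p(x1|s1)`, `p(x3|s1)` with
`H(S1|W3) < I(X1;Y3|X3,S1)` and `H(S1|W) < I(X1,X3;Y|W)`, then the source can be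
reliably transmitted over the DM CRBC. -/
theorem crbc_cpm_specialization
    {S1 W W3 X1 X3 Y Y3 : Type*}
    [Fintype S1] [Fintype W] [Fintype W3] [Fintype X1] [Fintype X3] [Fintype Y] [Fintype Y3]
    [DecidableEq S1] [DecidableEq W] [DecidableEq W3]
    [DecidableEq X1] [DecidableEq X3] [DecidableEq Y] [DecidableEq Y3]
    (pSrc : S1 × W × W3 → ℝ) (hSrc : IsPmf pSrc)
    (Q : X1 × X3 → Y × Y3 → ℝ) (hQ : ∀ x, IsPmf (Q x))
    (h : ∃ (pX1 : S1 → X1 → ℝ) (pX3 : S1 → X3 → ℝ),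
        (∀ s1, IsPmf (pX1 s1)) ∧ (∀ s1, IsPmf (pX3 s1)) ∧
        (let μ := crbcCpmJoint pSrc Q pX1 pX3
        -- H(S1|W3) < I(X1;Y3|X3,S1)
        (condEntropyOf μ (fun (s1,_,_,_,_,_,_) => s1) (fun (_,w3,_,_,_,_,_) => w3) <
          condMutualInfoOf μ (fun (_,_,_,x1,_,_,_) => x1)
            (fun (_,_,_,_,_,y3,_) => y3) (fun (s1,_,_,_,x3,_,_) => (x3, s1))) ∧
        -- H(S1|W) < I(X1,X3;Y|W)
        (condEntropyOf μ (fun (s1,_,_,_,_,_,_) => s1) (fun (_,_,w,_,_,_,_) => w) <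
          condMutualInfoOf μ (fun (_,_,_,x1,x3,_,_) => (x1, x3))
            (fun (_,_,_,_,_,_,y) => y) (fun (_,_,w,_,_,_,_) => w)))) :
    CrbcReliablyTransmitted pSrc Q := by
  obtain ⟨k1, k3, hk1, hk3, hR, hD⟩ := h
  have hk1' : ∀ s x, 0 ≤ k1 s x := fun s => (hk1 s).1
  have hk3' : ∀ s x, 0 ≤ k3 s x := fun s => (hk3 s).1
  refine crbcReliablyTransmitted_of_slopes hSrc hQ hk1 hk3
    (hasDerivAt_sourceFun (margSW3_nonneg hSrc))
    (hasDerivAt_relayFun _ hk1' (chanY3_nonneg hQ))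
    (hasDerivAt_sourceFun (margSW_nonneg hSrc))
    (hasDerivAt_destFun (margSW_nonneg hSrc) hk1' hk3' (chanY_nonneg hQ)) ?_ ?_
  · rw [← condEntropyOf_source_relay hSrc hQ hk1 hk3, ← neg_condMutualInfoOf_relay hSrc hQ hk1 hk3,
      ← sub_eq_add_neg]
    exact sub_neg.mpr hR
  · rw [← condEntropyOf_sub_condMutualInfoOf_dest hSrc hQ hk1 hk3]
    exact sub_neg.mpr hD
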